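/- Possible boundary lattice-point counts: Let ℓ be a positive integer, Q ⊆ ℝ² an ℓ-reflexive polygon with respect to ℤ², and Q* := ℓ·Q° its dual. Then the pair (#(frontier Q ∩ ℤ²), #(frontier Q* ∩ ℤ²)) belongs to the set {(3,9),(4,8),(5,7),(6,6),(7,5),(8,4),(9,3)}. -/

import Mathlib

open Set

noncomputable section

abbrev V : Type := ℝ × ℝ

/-- Standard inner product on ℝ². -/
def dotV (x y : V) : ℝ := x.1 * y.1 + x.2 * y.2

/-- The standard lattice ℤ² viewed inside ℝ². -/
def latticePts : Set V := {x : V | ∃ p : ℤ × ℤ, x = ((p.1 : ℝ), (p.2 : ℝ))}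

/-- A polygon: convex hull of a finite set of points that affinely spans ℝ². -/
def IsPolygon (Q : Set V) : Prop :=
  ∃ A : Finset V, Q = convexHull ℝ (A : Set V) ∧ affineSpan ℝ (A : Set V) = ⊤

/-- An edge of `Q`: a one-dimensional face, i.e. the argmin set of some nonzero
linear functional, containing more than one point. -/
def IsEdge (Q F : Set V) : Prop :=
  (∃ η : V, η ≠ 0 ∧ F = {y ∈ Q | ∀ z ∈ Q, dotV η y ≤ dotV η z}) ∧
    ∃ y₁ ∈ F, ∃ y₂ ∈ F, y₁ ≠ y₂

/-- A primitive lattice point: the only lattice points on the segment `conv {0, v}`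
are `0` and `v`. -/
def IsPrimitive (v : V) : Prop :=
  v ∈ latticePts ∧ v ≠ 0 ∧ segment ℝ (0 : V) v ∩ latticePts = {(0 : V), v}

/-- An ℓ-reflexive polygon with respect to ℤ². -/
structure IsLReflexive (ℓ : ℕ) (Q : Set V) : Prop where
  polygon : IsPolygon Q
  vertices_primitive : ∀ v ∈ Set.extremePoints ℝ Q, IsPrimitive v
  zero_mem_interior : (0 : V) ∈ interior Q
  edge_cond : ∀ F, IsEdge Q F →
    ∃ η : V, IsPrimitive η ∧ F ⊆ {y : V | dotV η y = -(ℓ : ℝ)}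

/-- The polar polygon `Q° = {x | ⟨x,y⟩ ≥ -1 for all y ∈ Q}`. -/
def polarPolygon (Q : Set V) : Set V := {x : V | ∀ y ∈ Q, -1 ≤ dotV x y}

/-- The dual of an ℓ-reflexive polygon: `Q* = ℓ·Q°`. -/
def dualPolygon (ℓ : ℕ) (Q : Set V) : Set V := (fun x : V => (ℓ : ℝ) • x) '' polarPolygon Q

/-!
Let `v_i` be the boundary lattice points of `Q` in counterclockwise order. Every edge lies at
lattice distance `ℓ` from the origin, so consecutive points satisfy `det (v_i, v_{i+1}) = ℓ`. Hence
`v_{i-1} + v_{i+1}` is parallel to `v_i`, and it is an integer multiple `c_i v_i` with `c_i ≤ 2`: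
either `v_i` is a vertex, hence primitive, or it lies inside an edge and `c_i = 2`.

The recursion `v_{i+1} = c_i v_i - v_{i-1}` shows that all `v_i` lie in the lattice spanned by
two consecutive ones, and with respect to that lattice the determinants are `1`
(`Fan.rebase_spec`). For such a unimodular fan `∑ (3 - c_i) = 12` (`Fan.sum_eq_twelve`): removing a
point with `c_i = 1` does not change the sum, and a convex fan without such a point has only three
or four points. So `n + W = 12`, where `n` is the number of points and `W = ∑ (2 - c_i)`
(`Fan.card_add_weight`).

The dual polygon is cut out by the inequalities `⟨x, v_i⟩ ≥ -ℓ`. Up to a rotation its edge belonging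
to `v_i` runs from `v_i - v_{i-1}` to `v_{i+1} - v_i`, and these differ by `(2 - c_i) v_i`. When the
edge is nondegenerate, `v_i` is primitive, so its lattice length is `2 - c_i` and the dual has exactly
`W` boundary lattice points (`ncard_frontier_dual`).

Finally `n ≥ 3`, and `W ≥ 3` since `∑ (2 - c_i) v_i = 0` with not all nonzero terms on one line; so
`(n, W)` is one of the seven pairs.
-/

/-! ### Cyclic configurations of integer vectors -/

/-- The determinant of a pair of integer vectors. -/
def D (a b : ℤ × ℤ) : ℤ := a.1 * b.2 - a.2 * b.1

/-- The points `p i`, `i ∈ B`, are the boundary lattice points of a convex polygon around the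
origin, in the counterclockwise order given by `σ`. Consecutive points have determinant `ℓ` (the
origin is at lattice distance `ℓ` from every edge, `det` and `step`), every point lies on the inner
side of every edge line (`supp`), and a point `p (σ i)` is either primitive, as the vertices are, or
the midpoint of its two neighbours (`vert`). That `σ` is a single cycle winding around the origin
once is a consequence, see `Fan.eq_of_stable`. -/
structure Fan {ι : Type} (ℓ : ℤ) (p : ι → ℤ × ℤ) (B : Finset ι) (σ : Equiv.Perm ι) : Prop where
  pos : 0 < ℓ
  nonempty : B.Nonempty
  map : ∀ i ∈ B, σ i ∈ B
  inj : ∀ i ∈ B, ∀ j ∈ B, p i = p j → i = j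
  det : ∀ i ∈ B, D (p i) (p (σ i)) = ℓ
  supp : ∀ i ∈ B, ∀ j ∈ B, 0 ≤ D (p (σ i) - p i) (p j - p i)
  step : ∀ i ∈ B, IsCoprime (p (σ i) - p i).1 (p (σ i) - p i).2
  vert : ∀ i ∈ B, IsCoprime (p (σ i)).1 (p (σ i)).2 ∨ p i + p (σ (σ i)) = (2 : ℤ) • p (σ i)

namespace Fan

variable {ι : Type} {ℓ : ℤ} {p : ι → ℤ × ℤ} {B : Finset ι} {σ : Equiv.Perm ι}

lemma mem_iff (h : Fan ℓ p B σ) (i : ι) : σ i ∈ B ↔ i ∈ B := by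
  refine ⟨fun hi => ?_, h.map i⟩
  have hs := Finset.surj_on_of_inj_on_of_card_le (s := B) (t := B) (fun i _ => σ i)
    (fun i hi => h.map i hi) (fun a b _ _ hab => σ.injective hab) le_rfl
  obtain ⟨j, hj, hji⟩ := hs (σ i) hi
  rwa [σ.injective hji]

lemma sum_shift (h : Fan ℓ p B σ) (f : ι → ℤ) : ∑ i ∈ B, f (σ i) = ∑ i ∈ B, f i :=
  Finset.sum_equiv σ (fun i => (h.mem_iff i).symm) (fun _ _ => rfl)

/-- At `σ i` the two neighbours of `p (σ i)` add up to an integer multiple of it, and convexity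
bounds the coefficient by `2`. -/
lemma exists_coeff (h : Fan ℓ p B σ) : ∃ c : ι → ℤ, ∀ i ∈ B,
    p i + p (σ (σ i)) = c i • p (σ i) ∧ c i ≤ 2 ∧ D (p i) (p (σ (σ i))) = c i * ℓ := by
  have key : ∀ i, ∃ c : ℤ, i ∈ B →
      p i + p (σ (σ i)) = c • p (σ i) ∧ c ≤ 2 ∧ D (p i) (p (σ (σ i))) = c * ℓ := by
    intro i
    by_cases hi : i ∈ B
    swap
    · exact ⟨0, fun h' => absurd h' hi⟩
    have hσ := h.map i hi
    have d1 := h.det i hi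
    have d2 := h.det _ hσ
    have sp := h.supp _ hσ _ hi
    have hℓ := h.pos
    have hc : ∃ c : ℤ, p i + p (σ (σ i)) = c • p (σ i) := by
      rcases h.vert i hi with hv | hv
      · obtain ⟨a, b, hab⟩ := hv
        refine ⟨a * (p i + p (σ (σ i))).1 + b * (p i + p (σ (σ i))).2, ?_⟩
        simp only [D] at d1 d2
        ext
        · simp only [Prod.fst_add, Prod.snd_add, Prod.smul_fst, smul_eq_mul]
          linear_combination (-(p i).1 - (p (σ (σ i))).1) * hab + b * (d1 - d2)
        · simp only [Prod.fst_add, Prod.snd_add, Prod.smul_snd, smul_eq_mul]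
          linear_combination (-(p i).2 - (p (σ (σ i))).2) * hab - a * (d1 - d2)
      · exact ⟨2, hv⟩
    obtain ⟨c, hc⟩ := hc
    refine ⟨c, fun _ => ?_⟩
    have h1 := congrArg Prod.fst hc
    have h2 := congrArg Prod.snd hc
    simp only [Prod.fst_add, Prod.snd_add, Prod.smul_fst, Prod.smul_snd, smul_eq_mul] at h1 h2
    have e : D (p i) (p (σ (σ i))) = c * ℓ := by
      simp only [D] at *
      linear_combination (p i).1 * h2 - (p i).2 * h1 + c * d1
    refine ⟨hc, ?_, e⟩
    have : D (p (σ (σ i)) - p (σ i)) (p i - p (σ i)) = 2 * ℓ - c * ℓ := by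
      rw [← e]
      simp only [D, Prod.fst_sub, Prod.snd_sub] at *
      linear_combination d1 + d2
    nlinarith
  choose c hc using key
  exact ⟨c, fun i hi => hc i hi⟩

lemma harmonic (h : Fan ℓ p B σ) (t : ι → ℤ)
    (ht : ∀ i ∈ B, t i + t (σ (σ i)) = 2 * t (σ i)) : ∀ i ∈ B, t (σ i) = t i := by
  have e1 := h.sum_shift (fun i => (t (σ i) - t i) * t i)
  have e2 : ∑ i ∈ B, (t (σ i) - t i) ^ 2 = 0 := by
    rw [← sub_eq_zero.mpr e1, ← Finset.sum_sub_distrib]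
    refine Finset.sum_congr rfl fun i hi => ?_
    linear_combination (- t (σ i)) * (ht i hi)
  intro i hi
  have := (Finset.sum_eq_zero_iff_of_nonneg (fun i _ => sq_nonneg _)).mp e2 i hi
  have := pow_eq_zero_iff (two_ne_zero) |>.mp this
  linarith

lemma lin {c : ι → ℤ} {i : ι} (a : ℤ × ℤ) (hc : p i + p (σ (σ i)) = c i • p (σ i)) :
    D a (p i) + D a (p (σ (σ i))) = c i * D a (p (σ i)) := by
  have h1 := congrArg Prod.fst hc
  have h2 := congrArg Prod.snd hc
  simp only [Prod.fst_add, Prod.snd_add, Prod.smul_fst, Prod.smul_snd, smul_eq_mul] at h1 h2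
  simp only [D]
  linear_combination a.1 * h2 - a.2 * h1

lemma eq_zero_of_D {a u v : ℤ × ℤ} (hℓ : D u v ≠ 0) (h1 : D a u = 0) (h2 : D a v = 0) :
    a = 0 := by
  simp only [D] at *
  ext
  · refine (mul_eq_zero.mp (?_ : a.1 * (u.1 * v.2 - u.2 * v.1) = 0)).resolve_right hℓ
    linear_combination u.1 * h2 - v.1 * h1
  · refine (mul_eq_zero.mp (?_ : a.2 * (u.1 * v.2 - u.2 * v.1) = 0)).resolve_right hℓ
    linear_combination u.2 * h2 - v.2 * h1

/-- `D (p i)` takes the distinct values `0` and `ℓ`, so it lacks the mean value property. -/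
lemma not_harmonic (h : Fan ℓ p B σ) (i : ι) (hi : i ∈ B)
    (ht : ∀ j ∈ B, D (p i) (p j) + D (p i) (p (σ (σ j))) = 2 * D (p i) (p (σ j))) : False := by
  have := h.harmonic (fun j => D (p i) (p j)) ht i hi
  simp only [h.det i hi] at this
  have h0 : D (p i) (p i) = 0 := by simp only [D]; ring
  have := h.pos
  omega

lemma exists_coeff_ne_two (h : Fan ℓ p B σ) {c : ι → ℤ}
    (hc : ∀ i ∈ B, p i + p (σ (σ i)) = c i • p (σ i)) : ∃ i ∈ B, c i ≠ 2 := by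
  by_contra! hcon
  obtain ⟨i, hi⟩ := h.nonempty
  exact h.not_harmonic i hi fun j hj => by rw [lin (c := c) _ (hc j hj), hcon j hj]

/-- The points weighted by `2 - c i` have centre of mass `0`: summing by parts around the cycle. -/
lemma sum_weight (h : Fan ℓ p B σ) {c : ι → ℤ}
    (hc : ∀ i ∈ B, p i + p (σ (σ i)) = c i • p (σ i)) (a : ℤ × ℤ) :
    ∑ i ∈ B, (2 - c i) * D a (p (σ i)) = 0 := by
  have e1 := h.sum_shift (fun i => D a (p i))
  have e2 := h.sum_shift (fun i => D a (p (σ i)))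
  have : ∑ i ∈ B, (2 - c i) * D a (p (σ i)) =
      ∑ i ∈ B, (2 * D a (p (σ i)) - D a (p i) - D a (p (σ (σ i)))) :=
    Finset.sum_congr rfl fun i hi => by linear_combination lin (c := c) a (hc i hi)
  rw [this, Finset.sum_sub_distrib, Finset.sum_sub_distrib, ← Finset.mul_sum]
  linarith

/-- The points surround the origin: no nonzero linear form is nonnegative on all of them. -/
lemma exists_neg (h : Fan ℓ p B σ) {a : ℤ × ℤ} (ha : a ≠ 0) : ∃ i ∈ B, D a (p i) < 0 := by
  by_contra! hcon
  obtain ⟨c, hc⟩ := h.exists_coeff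
  have hz := (Finset.sum_eq_zero_iff_of_nonneg (fun i hi =>
    mul_nonneg (sub_nonneg.mpr (hc i hi).2.1) (hcon _ (h.map i hi)))).mp
    (h.sum_weight (fun i hi => (hc i hi).1) a)
  have hh := h.harmonic (fun j => D a (p j)) fun i hi => by
    have := hz i hi
    have := lin (c := c) a (hc i hi).1
    linarith
  have hne : ∀ i ∈ B, D a (p i) ≠ 0 := fun i hi h0 => ha <|
    eq_zero_of_D (by rw [h.det i hi]; exact h.pos.ne') h0 ((hh i hi).trans h0)
  obtain ⟨i, hi, hi2⟩ := h.exists_coeff_ne_two (c := c) fun i hi => (hc i hi).1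
  rcases mul_eq_zero.mp (hz i hi) with h1 | h1
  · omega
  · exact hne _ (h.map i hi) h1

lemma sub (h : Fan ℓ p B σ) {S : Finset ι} (hS : S ⊆ B) (hn : S.Nonempty)
    (hm : ∀ i ∈ S, σ i ∈ S) : Fan ℓ p S σ :=
  ⟨h.pos, hn, hm, fun i hi j hj => h.inj i (hS hi) j (hS hj), fun i hi => h.det i (hS hi),
    fun i hi j hj => h.supp i (hS hi) j (hS hj), fun i hi => h.step i (hS hi),
    fun i hi => h.vert i (hS hi)⟩

lemma exists_cross (h : Fan ℓ p B σ) {a : ℤ × ℤ} (ha : a ≠ 0) :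
    ∃ i ∈ B, 0 ≤ D a (p i) ∧ D a (p (σ i)) < 0 := by
  by_contra! hcon
  obtain ⟨i, hi, hi0⟩ := h.exists_neg (neg_ne_zero.mpr ha)
  have hf : Fan ℓ p (B.filter fun i => 0 ≤ D a (p i)) σ := by
    refine h.sub (Finset.filter_subset _ _) ⟨i, ?_⟩ fun j hj => ?_
    · simp only [Finset.mem_filter]
      refine ⟨hi, ?_⟩
      simp only [D, Prod.fst_neg, Prod.snd_neg] at *
      linarith
    · simp only [Finset.mem_filter] at *
      exact ⟨h.map j hj.1, hcon j hj.1 hj.2⟩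
  obtain ⟨j, hj, hj0⟩ := hf.exists_neg ha
  simp only [Finset.mem_filter] at hj
  omega

lemma p_ne_zero (h : Fan ℓ p B σ) {i : ι} (hi : i ∈ B) : p i ≠ 0 := by
  intro h0
  have := h.det i hi
  have := h.pos
  simp [D, h0] at *
  omega

/-- The points form a single cycle: a `σ`-stable nonempty subset winds around the origin, so any
further point lies in one of its cones, and convexity leaves no room for it. -/
lemma eq_of_stable (h : Fan ℓ p B σ) {S : Finset ι} (hS : S ⊆ B) (hn : S.Nonempty)
    (hm : ∀ i ∈ S, σ i ∈ S) : S = B := by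
  refine Finset.Subset.antisymm hS fun w hw => ?_
  obtain ⟨i, hi, h1, h2⟩ := (h.sub hS hn hm).exists_cross (neg_ne_zero.mpr (h.p_ne_zero hw))
  have hiB := hS hi
  have s1 := h.supp i hiB w hw
  have s2 := h.supp w hw i hiB
  have s3 := h.supp w hw _ (h.map i hiB)
  have d1 := h.det i hiB
  have d2 := h.det w hw
  have hℓ := h.pos
  obtain ⟨a, b, hab⟩ := h.step i hiB
  suffices p w = p i by rwa [h.inj w hw i hiB this]
  generalize p w = W at *
  generalize p (σ w) = W' at *
  generalize p i = X at *
  generalize p (σ i) = Y at *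
  obtain ⟨W1, W2⟩ := W
  obtain ⟨Z1, Z2⟩ := W'
  obtain ⟨X1, X2⟩ := X
  obtain ⟨Y1, Y2⟩ := Y
  simp only [D, Prod.fst_sub, Prod.snd_sub, Prod.fst_neg, Prod.snd_neg] at *
  obtain ⟨β, hβ⟩ : ∃ β, β = X1 * W2 - X2 * W1 := ⟨_, rfl⟩
  obtain ⟨α, hα⟩ : ∃ α, α = W1 * Y2 - W2 * Y1 := ⟨_, rfl⟩
  have hα0 : 0 < α := by linarith
  have hβ0 : 0 ≤ β := by linarith
  have hle : α + β ≤ ℓ := by linarith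
  have P1 : ℓ * W1 = α * X1 + β * Y1 := by rw [hα, hβ, ← d1]; ring
  have P2 : ℓ * W2 = α * X2 + β * Y2 := by rw [hα, hβ, ← d1]; ring
  have hge : ℓ ≤ α + β := by
    have : 0 ≤ α * ((Z1 - W1) * (X2 - W2) - (Z2 - W2) * (X1 - W1))
       + β * ((Z1 - W1) * (Y2 - W2) - (Z2 - W2) * (Y1 - W1)) := by positivity
    have e : α * ((Z1 - W1) * (X2 - W2) - (Z2 - W2) * (X1 - W1))
       + β * ((Z1 - W1) * (Y2 - W2) - (Z2 - W2) * (Y1 - W1)) = ℓ * (α + β - ℓ) := by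
      linear_combination (Z2 - W2) * P1 - (Z1 - W1) * P2 + (α + β - ℓ) * d2
    rw [e] at this
    have := nonneg_of_mul_nonneg_right this hℓ
    linarith
  have hs : α + β = ℓ := le_antisymm hle hge
  have q1 : ℓ * (W1 - X1) = β * (Y1 - X1) := by
    linear_combination P1 + X1 * hs
  have q2 : ℓ * (W2 - X2) = β * (Y2 - X2) := by
    linear_combination P2 + X2 * hs
  have q3 : β = ℓ * (a * (W1 - X1) + b * (W2 - X2)) := by
    linear_combination (-β) * hab - a * q1 - b * q2
  have hβz : β = 0 := by
    refine Int.eq_zero_of_dvd_of_nonneg_of_lt hβ0 (by omega) ⟨_, q3⟩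
  rw [hβz] at q1 q2
  simp only [zero_mul, mul_eq_zero, hℓ.ne', false_or] at q1 q2
  ext <;> simp <;> omega

/-- Coordinates with respect to the basis `p o, p (σ o)`, which has determinant `ℓ`; the integer
divisions are exact because all points lie in the lattice spanned by that basis. -/
def rebase (ℓ : ℤ) (p : ι → ℤ × ℤ) (σ : Equiv.Perm ι) (o : ι) (i : ι) : ℤ × ℤ :=
  (D (p i) (p (σ o)) / ℓ, D (p o) (p i) / ℓ)

lemma mk_one (hn : B.Nonempty) (hm : ∀ i ∈ B, σ i ∈ B)
    (hi : ∀ i ∈ B, ∀ j ∈ B, p i = p j → i = j) (hd : ∀ i ∈ B, D (p i) (p (σ i)) = 1)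
    (hs : ∀ i ∈ B, ∀ j ∈ B, 0 ≤ D (p (σ i) - p i) (p j - p i)) : Fan 1 p B σ := by
  refine ⟨one_pos, hn, hm, hi, hd, hs, fun i hi => ?_, fun i hi => Or.inl ?_⟩
  · refine ⟨-(p i).2, (p i).1, ?_⟩
    have := hd i hi
    simp only [D, Prod.fst_sub, Prod.snd_sub] at *
    linear_combination this
  · refine ⟨-(p i).2, (p i).1, ?_⟩
    have := hd i hi
    simp only [D] at *
    linear_combination this

/-- In the lattice spanned by two consecutive points the fan becomes unimodular, because the
recursion `p i + p (σ (σ i)) = c i • p (σ i)` keeps all points in that lattice. -/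
lemma rebase_spec (h : Fan ℓ p B σ) {o : ι} (ho : o ∈ B) :
    Fan 1 (rebase ℓ p σ o) B σ ∧ ∀ i ∈ B, ∀ j ∈ B,
      D (p i) (p j) = ℓ * D (rebase ℓ p σ o i) (rebase ℓ p σ o j) := by
  classical
  obtain ⟨c, hc⟩ := h.exists_coeff
  have hℓ := h.pos
  have hdvd : ∀ i ∈ B, (ℓ ∣ D (p i) (p (σ o)) ∧ ℓ ∣ D (p o) (p i)) ∧
      (ℓ ∣ D (p (σ i)) (p (σ o)) ∧ ℓ ∣ D (p o) (p (σ i))) := by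
    have := h.eq_of_stable (S := B.filter fun i => (ℓ ∣ D (p i) (p (σ o)) ∧ ℓ ∣ D (p o) (p i)) ∧
      (ℓ ∣ D (p (σ i)) (p (σ o)) ∧ ℓ ∣ D (p o) (p (σ i)))) (Finset.filter_subset _ _)
      ⟨o, ?_⟩ ?_
    · intro i hi
      rw [← this] at hi
      exact (Finset.mem_filter.mp hi).2
    · have z : ∀ a, D a a = 0 := fun a => by simp only [D]; ring
      simp [ho, h.det o ho, z]
    · intro i hi
      obtain ⟨hi, ⟨h1, h2⟩, h3, h4⟩ := Finset.mem_filter.mp hi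
      refine Finset.mem_filter.mpr ⟨h.map i hi, ⟨h3, h4⟩, ?_, ?_⟩
      · have e := lin (c := c) (p (σ o)) (hc i hi).1
        have : D (p (σ (σ i))) (p (σ o)) = c i * D (p (σ i)) (p (σ o)) - D (p i) (p (σ o)) := by
          simp only [D] at *; linear_combination -e
        rw [this]
        exact dvd_sub (Dvd.dvd.mul_left h3 _) h1
      · have e := lin (c := c) (p o) (hc i hi).1
        have : D (p o) (p (σ (σ i))) = c i * D (p o) (p (σ i)) - D (p o) (p i) := by
          linear_combination e
        rw [this]
        exact dvd_sub (Dvd.dvd.mul_left h4 _) h2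
  have r1 : ∀ i ∈ B, D (p i) (p (σ o)) = ℓ * (rebase ℓ p σ o i).1 := fun i hi =>
    (Int.mul_ediv_cancel' (hdvd i hi).1.1).symm
  have r2 : ∀ i ∈ B, D (p o) (p i) = ℓ * (rebase ℓ p σ o i).2 := fun i hi =>
    (Int.mul_ediv_cancel' (hdvd i hi).1.2).symm
  have hD : ∀ i ∈ B, ∀ j ∈ B,
      D (p i) (p j) = ℓ * D (rebase ℓ p σ o i) (rebase ℓ p σ o j) := by
    intro i hi j hj
    have a1 := r1 i hi
    have a2 := r2 i hi
    have b1 := r1 j hj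
    have b2 := r2 j hj
    have d := h.det o ho
    have pl : D (p i) (p j) * D (p o) (p (σ o)) =
      D (p i) (p (σ o)) * D (p o) (p j) - D (p o) (p i) * D (p j) (p (σ o)) := by
      simp only [D]; ring
    rw [a1, a2, b1, b2, d] at pl
    apply mul_right_cancel₀ hℓ.ne'
    rw [pl]; simp only [D]; ring
  refine ⟨mk_one h.nonempty h.map ?_ ?_ ?_, hD⟩
  · intro i hi j hj e
    apply h.inj i hi j hj
    refine sub_eq_zero.mp
      (eq_zero_of_D (u := p o) (v := p (σ o)) (by rw [h.det o ho]; exact hℓ.ne') ?_ ?_)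
    · have a := r2 i hi
      have b := r2 j hj
      rw [e] at a
      simp only [D, Prod.fst_sub, Prod.snd_sub] at *
      linear_combination b - a
    · have a := r1 i hi
      have b := r1 j hj
      rw [e] at a
      simp only [D, Prod.fst_sub, Prod.snd_sub] at *
      linear_combination a - b
  · intro i hi
    have a := hD i hi _ (h.map i hi)
    rw [h.det i hi] at a
    apply mul_left_cancel₀ hℓ.ne'
    linarith
  · intro i hi j hj
    have a := h.supp i hi j hj
    have a1 := hD _ (h.map i hi) j hj
    have a2 := hD _ (h.map i hi) i hi
    have a3 := hD i hi j hj
    have ex : ∀ u v w : ℤ × ℤ, D (u - v) (w - v) = D u w - D u v - D v w := by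
      intros; simp only [D, Prod.fst_sub, Prod.snd_sub]; ring
    rw [ex] at *
    rw [a1, a2, a3] at a
    refine nonneg_of_mul_nonneg_right (a := ℓ) ?_ hℓ
    linarith

/-- A minimal fan, in which no point is the sum of its two neighbours. With `p u = (1, 0)`,
`p (σ u) = (0, 1)` and third point `(-1, k)`, `k ≤ 0`, all points but `p (σ u)` lie in the closed
lower half plane. If some `p (σ j)` in the open lower half plane has coefficient `≤ 0`, its
neighbours lie on the axis, and there are four points. Otherwise all nonzero weights `2 - c i` sit
at three points, and vanishing of the centre of mass leaves `k = -1` with three points (the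
projective plane) and `k = -2` with four. -/
lemma base_case [DecidableEq ι] (h : Fan 1 p B σ) {u : ι} (hu : u ∈ B) (pu : p u = (1, 0))
    (pv : p (σ u) = (0, 1)) (hle : D (p u) (p (σ (σ u))) ≤ 0)
    (hno : ∀ i ∈ B, D (p i) (p (σ (σ i))) ≠ 1) :
    ∑ i ∈ B, (3 - D (p i) (p (σ (σ i)))) = 12 := by
  obtain ⟨c, hc⟩ := h.exists_coeff
  obtain ⟨v, hv⟩ : ∃ v, v = σ u := ⟨_, rfl⟩
  obtain ⟨w, hw⟩ : ∃ w, w = σ v := ⟨_, rfl⟩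
  obtain ⟨k, hk⟩ : ∃ k, k = c u := ⟨_, rfl⟩
  have hvB : v ∈ B := hv ▸ h.map u hu
  have hwB : w ∈ B := hw ▸ h.map v hvB
  have hcu := hc u hu
  rw [← hv] at pv
  rw [← hv, ← hw, ← hk, pu, pv] at hcu
  rw [← hv, ← hw] at hle
  obtain ⟨hcu1, -, hcu2⟩ := hcu
  have pw : p w = (-1, k) := by
    have h1 := congrArg Prod.fst hcu1
    have h2 := congrArg Prod.snd hcu1
    simp at h1 h2
    ext <;> simp <;> omega
  have hk0 : k ≤ 0 := by rw [pu, hcu2] at hle; omega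
  have s1 : ∀ j ∈ B, (p j).1 + (p j).2 ≤ 1 := by
    intro j hj
    have := h.supp u hu j hj
    rw [← hv, pu, pv] at this
    simp [D] at this
    omega
  have s2 : ∀ j ∈ B, (p j).2 ≤ 1 + (1 - k) * (p j).1 := by
    intro j hj
    have := h.supp v hvB j hj
    rw [← hw, pw, pv] at this
    simp [D] at this
    linarith
  have t1 : ∀ j ∈ B, j ≠ v → (p j).2 ≤ 0 := by
    intro j hj hjv
    by_contra! hpos
    have a1 := s1 j hj
    have a2 := s2 j hj
    have hx : 0 ≤ (p j).1 := by
      by_contra! hx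
      nlinarith
    exact hjv (h.inj j hj v hvB (by rw [pv]; ext <;> simp <;> omega))
  have t2 : ∀ j ∈ B, (p j).2 = 0 → j = u ∨ j = w := by
    intro j hj h0
    have a1 := s1 j hj
    have a2 := s2 j hj
    have a3 : (p j).1 ≠ 0 := fun h1 => h.p_ne_zero hj (Prod.ext h1 h0)
    rw [h0] at a1 a2
    rcases lt_or_gt_of_ne a3 with hx | hx
    · right
      have hx1 : (p j).1 = -1 := by nlinarith
      rw [hx1] at a2
      exact h.inj j hj w hwB (by rw [pw]; ext <;> simp <;> omega)
    · left
      exact h.inj j hj u hu (by rw [pu]; ext <;> simp <;> omega)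
  have huv : u ≠ v := by rintro rfl; rw [pu] at pv; simp at pv
  have huw : u ≠ w := by rintro rfl; rw [pu] at pw; simp at pw
  have hvw : v ≠ w := by rintro rfl; rw [pv] at pw; simp at pw
  -- A fan closing up after four points is treated by direct summation.
  have four : σ (σ w) = u → D (p u) (p w) + D (p w) (p u) +
      (D (p v) (p (σ w)) + D (p (σ w)) (p v)) = 0 →
      ∑ i ∈ B, (3 - D (p i) (p (σ (σ i)))) = 12 := by
    intro hcl _
    have hsw : σ w ∈ B := h.map w hwB
    have n1 : σ w ≠ u := by
      intro e
      rw [e, ← hv] at hcl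
      exact huv hcl.symm
    have n2 : σ w ≠ v := by
      intro e
      rw [e, ← hw] at hcl
      exact huw hcl.symm
    have n3 : σ w ≠ w := by
      intro e
      rw [e, e] at hcl
      exact huw hcl.symm
    have hB : ({u, v, w, σ w} : Finset ι) = B := by
      refine h.eq_of_stable ?_ (by simp) ?_
      · simp [Finset.insert_subset_iff, hu, hvB, hwB, hsw]
      · intro i hi
        simp only [Finset.mem_insert, Finset.mem_singleton] at hi
        rcases hi with rfl | rfl | rfl | rfl <;> simp [← hv, ← hw, hcl]
    rw [← hB, Finset.sum_insert (by simp [huv, huw, n1.symm]),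
      Finset.sum_insert (by simp [hvw, n2.symm]), Finset.sum_insert (by simp [n3.symm]),
      Finset.sum_singleton, ← hv, ← hw, hcl, ← hv]
    linarith
  have anti : ∀ a b, D a b + D b a = 0 := by intros; simp only [D]; ring
  by_cases hI : ∃ j ∈ B, σ j ≠ u ∧ σ j ≠ v ∧ σ j ≠ w ∧ c j ≠ 2
  · obtain ⟨j, hj, j1, j2, j3, j4⟩ := hI
    have hsj := h.map j hj
    have hssj := h.map _ hsj
    have y1 := t1 j hj (by rintro rfl; exact j3 hw.symm)
    have y2 := t1 _ hssj (by rw [hv]; exact fun e => j1 (σ.injective e))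
    have y3 := t1 _ hsj j2
    have y4 : (p (σ j)).2 ≠ 0 := fun e => (t2 _ hsj e).elim j1 j3
    have hcj := hc j hj
    have l := congrArg Prod.snd hcj.1
    simp at l
    have c1 : c j ≠ 1 := by
      intro e
      apply hno j hj
      rw [hcj.2.2, e]; rfl
    have c2 := hcj.2.1
    have c0 : c j = 0 := by
      have : 0 ≤ c j := by
        by_contra! hneg
        nlinarith [lt_of_le_of_ne y3 y4]
      omega
    rw [c0] at l
    have hjw : j = w := (t2 j hj (by omega)).resolve_left (by rintro rfl; exact j2 hv.symm)
    have hcl : σ (σ j) = u := (t2 _ hssj (by omega)).resolve_right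
      (by rw [hw]; exact fun e => j2 (σ.injective e))
    subst hjw
    exact four hcl (by rw [anti, anti]; rfl)
  · push Not at hI
    obtain ⟨m, hm⟩ : ∃ m, σ m = u := ⟨σ.symm u, by simp⟩
    have hmB : m ∈ B := (h.mem_iff m).mp (hm ▸ hu)
    have hmu : m ≠ u := by rintro rfl; exact huv (hm.symm.trans hv.symm)
    have hmv : m ≠ v := by rintro rfl; exact huw (hm.symm.trans hw.symm)
    have hsum : ∀ a, (2 - c m) * D a (p u) + ((2 - c u) * D a (p v) + (2 - c v) * D a (p w)) = 0 := by
      intro a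
      rw [← h.sum_weight (fun i hi => (hc i hi).1) a]
      have hsub : ({m, u, v} : Finset ι) ⊆ B := by
        simp [Finset.insert_subset_iff, hu, hvB, hmB]
      rw [← Finset.sum_subset hsub, Finset.sum_insert (by simp [hmu, hmv]),
        Finset.sum_insert (by simp [huv]), Finset.sum_singleton, hm, ← hv, ← hw]
      intro j hj hj'
      simp only [Finset.mem_insert, Finset.mem_singleton, not_or] at hj'
      rw [hI j hj (by rw [← hm]; exact fun e => hj'.1 (σ.injective e))
        (by rw [hv]; exact fun e => hj'.2.1 (σ.injective e))
        (by rw [hw]; exact fun e => hj'.2.2 (σ.injective e))]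
      ring
    have f1 := hsum (1, 0)
    have f2 := hsum (0, 1)
    rw [← hk] at f1 f2
    simp [D, pu, pv, pw] at f1 f2
    obtain ⟨e, he⟩ : ∃ e, e = c v := ⟨_, rfl⟩
    rw [← he] at f1 f2
    have hke : k * (e - 1) = 2 := by linarith
    have hm2 : c m = e := by linarith
    have hcv := (hc v hvB).1
    rw [← hw, ← he] at hcv
    have hcm := (hc m hmB).1
    rw [hm, ← hv, hm2] at hcm
    have hkd : -k ∣ 2 := ⟨1 - e, by linarith⟩
    have hk2 : -k ≤ 2 := Int.le_of_dvd (by norm_num) hkd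
    have hcv1 := congrArg Prod.fst hcv
    have hcv2 := congrArg Prod.snd hcv
    have hcm1 := congrArg Prod.fst hcm
    have hcm2 := congrArg Prod.snd hcm
    simp [pv, pw, pu] at hcv1 hcv2 hcm1 hcm2
    have hk3 : k = 0 ∨ k = -1 ∨ k = -2 := by omega
    rcases hk3 with rfl | rfl | rfl
    · omega
    · have : e = -1 := by omega
      subst this
      have hcl : σ w = u := h.inj _ (h.map w hwB) u hu (by
        rw [pu]; ext <;> simp <;> omega)
      have hB : ({u, v, w} : Finset ι) = B := by
        refine h.eq_of_stable ?_ (by simp) ?_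
        · simp [Finset.insert_subset_iff, hu, hvB, hwB]
        · intro i hi
          simp only [Finset.mem_insert, Finset.mem_singleton] at hi
          rcases hi with rfl | rfl | rfl <;> simp [← hv, ← hw, hcl]
      rw [← hB, Finset.sum_insert (by simp [huv, huw]),
        Finset.sum_insert (by simp [hvw]), Finset.sum_singleton, ← hv, ← hw, hcl, ← hv]
      simp [D, pu, pv, pw]
    · have : e = 0 := by omega
      subst this
      have hmw : m = σ w := h.inj _ hmB _ (h.map w hwB) (by
        ext <;> omega)
      exact four (by rw [← hmw, hm]) (by rw [anti, anti]; rfl)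

/-- Induction on the number of points: the sum is unchanged when a point which is the sum of its two
neighbours is removed (a blow-down), and minimal fans are covered by `base_case`. -/
theorem sum_eq_twelve [DecidableEq ι] (h : Fan 1 p B σ) :
    ∑ i ∈ B, (3 - D (p i) (p (σ (σ i)))) = 12 := by
  induction hn : B.card generalizing B σ with
  | zero => exact absurd (Finset.card_eq_zero.mp hn) h.nonempty.ne_empty
  | succ n ih =>
    have anti : ∀ a b, D a b = - D b a := by intros; simp only [D]; ring
    by_cases h1 : ∃ i ∈ B, D (p i) (p (σ (σ i))) = 1
    · obtain ⟨u, hu, hu1⟩ := h1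
      obtain ⟨v, hv⟩ : ∃ v, v = σ u := ⟨_, rfl⟩
      obtain ⟨w, hw⟩ : ∃ w, w = σ v := ⟨_, rfl⟩
      obtain ⟨m, hm⟩ : ∃ m, σ m = u := ⟨σ.symm u, by simp⟩
      have hmB : m ∈ B := (h.mem_iff m).mp (hm ▸ hu)
      have hvB : v ∈ B := hv ▸ h.map u hu
      have hwB : w ∈ B := hw ▸ h.map v hvB
      have hz : ∀ a, D a a = 0 := by intros; simp only [D]; ring
      have hself : ∀ i ∈ B, σ i ≠ i := fun i hi e => by
        have := h.det i hi
        rw [e, hz] at this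
        omega
      have huv : u ≠ v := by rw [hv]; exact (hself u hu).symm
      have hvw : v ≠ w := by rw [hw]; exact (hself v hvB).symm
      have hmu : m ≠ u := by rw [← hm]; exact (hself m hmB).symm
      rw [← hv, ← hw] at hu1
      have huw : u ≠ w := by rintro rfl; rw [hz] at hu1; omega
      have hmv : m ≠ v := by rintro rfl; exact huw (hm.symm.trans hw.symm)
      have duv : D (p u) (p v) = 1 := by rw [hv]; exact h.det u hu
      have dvw : D (p v) (p w) = 1 := by rw [hw]; exact h.det v hvB
      have dmu : D (p m) (p u) = 1 := by have := h.det m hmB; rwa [hm] at this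
      have hmw : m ≠ w := by rintro rfl; rw [anti] at dmu; omega
      have pv : p v = p u + p w := by
        refine sub_eq_zero.mp (eq_zero_of_D (u := p u) (v := p w) (by rw [hu1]; simp) ?_ ?_)
        · simp only [D, Prod.fst_sub, Prod.snd_sub, Prod.fst_add, Prod.snd_add] at *
          linarith
        · simp only [D, Prod.fst_sub, Prod.snd_sub, Prod.fst_add, Prod.snd_add] at *
          linarith
      obtain ⟨τ, hτ⟩ : ∃ τ, τ = Equiv.swap v w * σ := ⟨_, rfl⟩
      have τu : τ u = w := by rw [hτ, Equiv.Perm.mul_apply, ← hv, Equiv.swap_apply_left]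
      have τo : ∀ j, j ≠ u → j ≠ v → τ j = σ j := by
        intro j h1 h2
        rw [hτ, Equiv.Perm.mul_apply, Equiv.swap_apply_of_ne_of_ne]
        · rw [hv]; exact fun e => h1 (σ.injective e)
        · rw [hw]; exact fun e => h2 (σ.injective e)
      have hτm : ∀ i ∈ B.erase v, τ i ∈ B.erase v := by
        intro i hi
        obtain ⟨hiv, hi⟩ := Finset.mem_erase.mp hi
        by_cases hiu : i = u
        · rw [hiu, τu]; exact Finset.mem_erase.mpr ⟨hvw.symm, hwB⟩
        · rw [τo i hiu hiv]
          exact Finset.mem_erase.mpr ⟨by rw [hv]; exact fun e => hiu (σ.injective e), h.map i hi⟩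
      have hF : Fan 1 p (B.erase v) τ := by
        refine mk_one ⟨u, Finset.mem_erase.mpr ⟨huv, hu⟩⟩ hτm ?_ ?_ ?_
        · exact fun i hi j hj => h.inj i (Finset.mem_of_mem_erase hi) j (Finset.mem_of_mem_erase hj)
        · intro i hi
          obtain ⟨hiv, hi⟩ := Finset.mem_erase.mp hi
          by_cases hiu : i = u
          · rw [hiu, τu, hu1]
          · rw [τo i hiu hiv]; exact h.det i hi
        · intro i hi j hj
          obtain ⟨hiv, hi⟩ := Finset.mem_erase.mp hi
          obtain ⟨hjv, hj⟩ := Finset.mem_erase.mp hj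
          by_cases hiu : i = u
          · rw [hiu, τu]
            -- In the basis `p u, p w` the point `p j` has both coordinates at most `1`, and
            -- `(1, 1)` is the removed point `p v`.
            have a1 := h.supp u hu j hj
            have a2 := h.supp v hvB j hj
            rw [← hv] at a1
            rw [← hw] at a2
            by_contra! hneg
            apply hjv
            apply h.inj j hj v hvB
            have b1 : D (p j) (p w) ≤ 1 := by
              rw [pv] at a1
              simp only [D, Prod.fst_sub, Prod.snd_sub, Prod.fst_add, Prod.snd_add] at *
              linarith
            have b2 : D (p u) (p j) ≤ 1 := by
              rw [pv] at a2
              simp only [D, Prod.fst_sub, Prod.snd_sub, Prod.fst_add, Prod.snd_add] at *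
              linarith
            have b3 : 1 < D (p j) (p w) + D (p u) (p j) := by
              simp only [D, Prod.fst_sub, Prod.snd_sub, Prod.fst_add, Prod.snd_add] at *
              linarith
            have b4 : D (p j) (p w) = 1 := by omega
            have b5 : D (p u) (p j) = 1 := by omega
            refine sub_eq_zero.mp (eq_zero_of_D (u := p u) (v := p w) (by rw [hu1]; simp) ?_ ?_)
            · simp only [D, Prod.fst_sub, Prod.snd_sub] at *
              linarith
            · simp only [D, Prod.fst_sub, Prod.snd_sub] at *
              linarith
          · rw [τo i hiu hiv]; exact h.supp i hi j hj
      have hcard : (B.erase v).card = n := by rw [Finset.card_erase_of_mem hvB, hn]; rfl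
      rw [← ih hF hcard, ← Finset.add_sum_erase B _ hvB]
      have hpt : ∀ j ∈ B.erase v, 3 - D (p j) (p (τ (τ j))) = (3 - D (p j) (p (σ (σ j)))) +
          (if j = m then 1 else 0) +
          (if j = u then (3 - D (p v) (p (σ (σ v)))) - 1 else 0) := by
        intro j hj
        obtain ⟨hjv, hj⟩ := Finset.mem_erase.mp hj
        by_cases hju : j = u
        · rw [if_neg (hju ▸ hmu.symm), if_pos hju, hju, τu, τo w huw.symm hvw.symm, ← hv, ← hw, hu1]
          have dws := h.det w hwB
          rw [pv]
          simp only [D, Prod.fst_add, Prod.snd_add] at *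
          linarith
        · rw [if_neg hju, τo j hju hjv]
          by_cases hjm : j = m
          · rw [if_pos hjm, hjm, hm, τu, ← hv, pv]
            simp only [D, Prod.fst_add, Prod.snd_add] at *
            linarith
          · rw [if_neg hjm, τo]
            · ring
            · rw [← hm]; exact fun e => hjm (σ.injective e)
            · rw [hv]; exact fun e => hju (σ.injective e)
      rw [Finset.sum_congr rfl hpt, Finset.sum_add_distrib, Finset.sum_add_distrib,
        Finset.sum_ite_eq', Finset.sum_ite_eq', if_pos (Finset.mem_erase.mpr ⟨hmv, hmB⟩),
        if_pos (Finset.mem_erase.mpr ⟨huv, hu⟩)]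
      ring
    · push Not at h1
      obtain ⟨c, hc⟩ := h.exists_coeff
      obtain ⟨u, hu, hu2⟩ := h.exists_coeff_ne_two (c := c) fun i hi => (hc i hi).1
      obtain ⟨hF, hD⟩ := h.rebase_spec hu
      have hDr : ∀ i ∈ B, D (rebase 1 p σ u i) (rebase 1 p σ u (σ (σ i))) =
          D (p i) (p (σ (σ i))) := fun i hi => by
        rw [hD i hi _ (h.map _ (h.map i hi)), one_mul]
      have hz : ∀ a, D a a = 0 := by intros; simp only [D]; ring
      have := hF.base_case hu (by simp [rebase, h.det u hu, hz]) (by simp [rebase, h.det u hu, hz])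
        (by
          rw [hDr u hu]
          have a := h1 u hu
          have b := hc u hu
          rw [b.2.2] at a ⊢
          omega) (fun i hi => by rw [hDr i hi]; exact h1 i hi)
      rw [← this]
      exact Finset.sum_congr rfl fun i hi => by rw [hDr i hi]

/-- The numbers of points of `B` and of the dual (`∑ (2 - c i)`) add up to twelve. -/
theorem card_add_weight [DecidableEq ι] (h : Fan ℓ p B σ) {c : ι → ℤ}
    (hc : ∀ i ∈ B, p i + p (σ (σ i)) = c i • p (σ i) ∧ c i ≤ 2 ∧ D (p i) (p (σ (σ i))) = c i * ℓ) :
    (B.card : ℤ) + ∑ i ∈ B, (2 - c i) = 12 := by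
  obtain ⟨o, ho⟩ := h.nonempty
  obtain ⟨hF, hD⟩ := h.rebase_spec ho
  rw [← hF.sum_eq_twelve, Finset.card_eq_sum_ones, Nat.cast_sum, ← Finset.sum_add_distrib]
  refine Finset.sum_congr rfl fun i hi => ?_
  have a := hD i hi _ (h.map _ (h.map i hi))
  rw [(hc i hi).2.2, mul_comm] at a
  rw [← mul_left_cancel₀ h.pos.ne' a]
  push_cast
  ring

theorem three_le_card (h : Fan ℓ p B σ) : 3 ≤ B.card := by
  classical
  obtain ⟨u, hu⟩ := h.nonempty
  have hz : ∀ a, D a a = 0 := by intros; simp only [D]; ring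
  have anti : ∀ a b, D a b = - D b a := by intros; simp only [D]; ring
  have hℓ := h.pos
  have d1 := h.det u hu
  have d2 := h.det _ (h.map u hu)
  refine Finset.two_lt_card.mpr ⟨u, hu, σ u, h.map u hu, σ (σ u), h.map _ (h.map u hu), ?_, ?_, ?_⟩
  · intro e; rw [← e, hz] at d1; omega
  · intro e; rw [← e, anti] at d2; omega
  · intro e; rw [← e, hz] at d2; omega

/-- At least three of the weights are nonzero, since their centre of mass is `0` and the points are
not all on one line. -/
theorem three_le_weight (h : Fan ℓ p B σ) {c : ι → ℤ}
    (hc : ∀ i ∈ B, p i + p (σ (σ i)) = c i • p (σ i) ∧ c i ≤ 2) : 3 ≤ ∑ i ∈ B, (2 - c i) := by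
  classical
  obtain ⟨k, hk, hk2⟩ := h.exists_coeff_ne_two (c := c) fun i hi => (hc i hi).1
  have hsum := h.sum_weight (fun i hi => (hc i hi).1) (p (σ k))
  have hne : ∃ i ∈ B, (2 - c i) * D (p (σ k)) (p (σ i)) ≠ 0 := by
    by_contra! hcon
    refine h.not_harmonic (σ k) (h.map k hk) fun j hj => ?_
    have := lin (c := c) (p (σ k)) (hc j hj).1
    have := hcon j hj
    linarith
  have hpos := Finset.exists_pos_of_sum_zero_of_exists_nonzero _ hsum hne
  have hneg := Finset.exists_pos_of_sum_zero_of_exists_nonzero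
    (fun i => -((2 - c i) * D (p (σ k)) (p (σ i)))) (by rw [Finset.sum_neg_distrib, hsum, neg_zero])
    (by simpa using hne)
  obtain ⟨a, ha, ha0⟩ := hpos
  obtain ⟨b, hb, hb0⟩ := hneg
  have hab : a ≠ b := by rintro rfl; omega
  have hz : D (p (σ k)) (p (σ k)) = 0 := by simp only [D]; ring
  have hka : k ≠ a := by rintro rfl; rw [hz] at ha0; simp at ha0
  have hkb : k ≠ b := by rintro rfl; rw [hz] at hb0; simp at hb0
  have w1 : 1 ≤ 2 - c k := by have := (hc k hk).2; omega
  have w2 : 1 ≤ 2 - c a := by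
    have := (hc a ha).2
    have : 2 - c a ≠ 0 := fun e => by rw [e] at ha0; simp at ha0
    omega
  have w3 : 1 ≤ 2 - c b := by
    have := (hc b hb).2
    have : 2 - c b ≠ 0 := fun e => by rw [e] at hb0; simp at hb0
    omega
  have hle := Finset.sum_le_sum_of_subset_of_nonneg (s := {k, a, b}) (t := B)
    (f := fun i => 2 - c i) (by simp [Finset.insert_subset_iff, hk, ha, hb])
    (fun i hi _ => by have := (hc i hi).2; omega)
  rw [Finset.sum_insert (by simp [hka, hkb]), Finset.sum_insert (by simp [hab]),
    Finset.sum_singleton] at hle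
  omega

end Fan

/-! ### Boundary lattice points of a reflexive polygon -/

/-- The inclusion of `ℤ²` in the plane. -/
def emb (a : ℤ × ℤ) : V := ((a.1 : ℝ), (a.2 : ℝ))

/-- The determinant of a pair of vectors of the plane. -/
def dR (x y : V) : ℝ := x.1 * y.2 - x.2 * y.1

lemma emb_injective : Function.Injective emb := by
  intro a b h
  simp only [emb, Prod.mk.injEq, Int.cast_inj] at h
  exact Prod.ext h.1 h.2

lemma dR_emb (a b : ℤ × ℤ) : dR (emb a) (emb b) = (D a b : ℝ) := by
  simp [dR, emb, D]

lemma emb_sub (a b : ℤ × ℤ) : emb (a - b) = emb a - emb b := by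
  simp [emb]

lemma isCoprime_of_isPrimitive {a : ℤ × ℤ} (h : IsPrimitive (emb a)) : IsCoprime a.1 a.2 := by
  obtain ⟨-, h0, hseg⟩ := h
  rw [Int.isCoprime_iff_gcd_eq_one]
  obtain ⟨g, hg⟩ : ∃ g, g = Int.gcd a.1 a.2 := ⟨_, rfl⟩
  rw [← hg]
  have hg0 : g ≠ 0 := by
    rw [hg]
    intro h
    rw [Int.gcd_eq_zero_iff] at h
    exact h0 (by simp [emb, h.1, h.2])
  have hg1 : (0 : ℝ) < g := by exact_mod_cast Nat.pos_of_ne_zero hg0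
  obtain ⟨x, hx⟩ : (g : ℤ) ∣ a.1 := hg ▸ Int.gcd_dvd_left ..
  obtain ⟨y, hy⟩ : (g : ℤ) ∣ a.2 := hg ▸ Int.gcd_dvd_right ..
  have hx' : (a.1 : ℝ) = g * x := by exact_mod_cast congrArg (Int.cast (R := ℝ)) hx
  have hy' : (a.2 : ℝ) = g * y := by exact_mod_cast congrArg (Int.cast (R := ℝ)) hy
  have hmem : emb (x, y) ∈ segment ℝ (0 : V) (emb a) ∩ latticePts := by
    refine ⟨?_, (x, y), rfl⟩
    rw [segment_eq_image]
    refine ⟨(g : ℝ)⁻¹, ⟨by positivity, inv_le_one_of_one_le₀ ?_⟩, ?_⟩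
    · exact_mod_cast Nat.one_le_iff_ne_zero.mpr hg0
    · ext
      · simp [emb, hx', hg1.ne']
      · simp [emb, hy', hg1.ne']
  rw [hseg] at hmem
  rcases hmem with h | h
  · have h1 : x = 0 := by simpa [emb] using congrArg Prod.fst h
    have h2 : y = 0 := by simpa [emb] using congrArg Prod.snd h
    exact absurd (by simp [emb, hx', hy', h1, h2]) h0
  · have h' := emb_injective h
    rw [← h'] at hx hy
    simp only at hx hy
    by_contra hne
    have hne' : (g : ℤ) ≠ 1 := by exact_mod_cast hne
    have h1 : x = 0 := by
      by_contra hx0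
      exact hne' (mul_right_cancel₀ hx0 (by rw [← hx, one_mul]))
    have h2 : y = 0 := by
      by_contra hy0
      exact hne' (mul_right_cancel₀ hy0 (by rw [← hy, one_mul]))
    exact h0 (by simp [emb, hx', hy', h1, h2])

lemma exists_add_smul_mem {S : Set V} {q : V} (hq : q ∈ interior S) (d : V) :
    ∃ t : ℝ, 0 < t ∧ q + t • d ∈ S := by
  have hc : Continuous fun t : ℝ => q + t • d := by fun_prop
  have hm : (fun t : ℝ => q + t • d) ⁻¹' interior S ∈ nhds (0 : ℝ) :=
    (isOpen_interior.preimage hc).mem_nhds (by simpa using hq)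
  obtain ⟨ε, hε, hb⟩ := Metric.mem_nhds_iff.mp hm
  refine ⟨ε / 2, by positivity, interior_subset (hb ?_ : _ ∈ interior S)⟩
  simp only [Metric.mem_ball, dist_zero_right, Real.norm_eq_abs]
  rw [abs_of_pos (by positivity)]
  linarith

/-- A nonzero linear form does not attain its minimum over `S` at an interior point. -/
lemma not_mem_interior {S : Set V} {q a : V} (ha : a ≠ 0) (h : ∀ z ∈ S, dR a q ≤ dR a z) :
    q ∉ interior S := by
  intro hq
  obtain ⟨t, ht, hm⟩ := exists_add_smul_mem hq (a.2, -a.1)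
  have := h _ hm
  have hpos : 0 < a.1 ^ 2 + a.2 ^ 2 := by
    have : a.1 ≠ 0 ∨ a.2 ≠ 0 := by
      by_contra! hh
      exact ha (Prod.ext hh.1 hh.2)
    rcases this with h | h <;> positivity
  simp only [dR, Prod.fst_add, Prod.snd_add, Prod.smul_fst, Prod.smul_snd, smul_eq_mul] at this
  nlinarith [mul_pos ht hpos]

section

variable {ℓ : ℕ} {Q : Set V}

lemma polygon_facts (hQ : IsLReflexive ℓ Q) : IsCompact Q ∧ Convex ℝ Q ∧
    (extremePoints ℝ Q).Finite ∧ Q = convexHull ℝ (extremePoints ℝ Q) := by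
  obtain ⟨A, hA, -⟩ := hQ.polygon
  have h1 : IsCompact Q := hA ▸ A.finite_toSet.isCompact_convexHull (𝕜 := ℝ)
  have h2 : Convex ℝ Q := hA ▸ convex_convexHull ℝ _
  have h3 : (extremePoints ℝ Q).Finite :=
    A.finite_toSet.subset (by rw [hA]; exact extremePoints_convexHull_subset)
  refine ⟨h1, h2, h3, ?_⟩
  rw [← (h3.isClosed_convexHull (𝕜 := ℝ)).closure_eq, closure_convexHull_extremePoints h1 h2]

lemma convex_dR (a : V) (r : ℝ) : Convex ℝ {q : V | r ≤ dR a q} := by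
  intro x hx y hy s t hs ht hst
  simp only [Set.mem_ofPred_eq, dR, Prod.fst_add, Prod.snd_add, Prod.smul_fst, Prod.smul_snd,
    smul_eq_mul] at *
  have : r = s * r + t * r := by rw [← add_mul, hst, one_mul]
  nlinarith [mul_le_mul_of_nonneg_left hx hs, mul_le_mul_of_nonneg_left hy ht]

lemma le_dR_of_extreme (hQ : IsLReflexive ℓ Q) {a : V} {r : ℝ}
    (h : ∀ e ∈ extremePoints ℝ Q, r ≤ dR a e) : ∀ q ∈ Q, r ≤ dR a q := by
  intro q hq
  rw [(polygon_facts hQ).2.2.2] at hq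
  exact convexHull_min (t := {q : V | r ≤ dR a q}) h (convex_dR a r) hq

lemma mem_frontier_of (hQ : IsLReflexive ℓ Q) {q a : V} (hq : q ∈ Q) (ha : a ≠ 0)
    (h : ∀ z ∈ Q, dR a q ≤ dR a z) : q ∈ frontier Q := by
  rw [(polygon_facts hQ).1.isClosed.frontier_eq]
  exact ⟨hq, not_mem_interior ha h⟩

lemma exists_support (hQ : IsLReflexive ℓ Q) {v : V} (hv : v ∈ frontier Q) :
    ∃ m n : ℝ, 0 < m * v.1 + n * v.2 ∧ ∀ q ∈ Q, m * q.1 + n * q.2 ≤ m * v.1 + n * v.2 := by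
  obtain ⟨hc, hconv, -, -⟩ := polygon_facts hQ
  have hvi : v ∉ interior Q := by
    rw [hc.isClosed.frontier_eq] at hv
    exact hv.2
  obtain ⟨f, hf⟩ := geometric_hahn_banach_open_point hconv.interior isOpen_interior hvi
  have hrep : ∀ q : V, f q = f (1, 0) * q.1 + f (0, 1) * q.2 := by
    intro q
    have : q = q.1 • ((1 : ℝ), (0 : ℝ)) + q.2 • ((0 : ℝ), (1 : ℝ)) := by ext <;> simp
    conv_lhs => rw [this]
    rw [map_add, map_smul, map_smul, smul_eq_mul, smul_eq_mul]
    ring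
  refine ⟨f (1, 0), f (0, 1), ?_, fun q hq => ?_⟩
  · rw [← hrep]
    simpa using hf 0 hQ.zero_mem_interior
  · rw [← hrep, ← hrep]
    have hqc : q ∈ closure (interior Q) := by
      rw [hconv.closure_interior_eq_closure_of_nonempty_interior ⟨0, hQ.zero_mem_interior⟩]
      exact subset_closure hq
    exact closure_minimal (t := {q | f q ≤ f v}) (fun x hx => (hf x hx).le)
      (isClosed_le f.continuous continuous_const) hqc

/-- From every boundary point an edge leaves in the counterclockwise direction. -/
lemma exists_edge_end (hQ : IsLReflexive ℓ Q) {v : V} (hv : v ∈ frontier Q) :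
    ∃ w ∈ extremePoints ℝ Q, 0 < dR v w ∧ ∀ q ∈ Q, dR (w - v) v ≤ dR (w - v) q := by
  obtain ⟨m, n, hpos, hsup⟩ := exists_support hQ hv
  obtain ⟨hc, hconv, hfin, hhull⟩ := polygon_facts hQ
  have hv0 : v ≠ 0 := by rintro rfl; simp at hpos
  have hN : 0 < v.1 ^ 2 + v.2 ^ 2 := by
    have : v.1 ≠ 0 ∨ v.2 ≠ 0 := by
      by_contra! hh
      exact hv0 (Prod.ext hh.1 hh.2)
    rcases this with h | h <;> positivity
  have hne : ∃ e ∈ extremePoints ℝ Q, 0 < dR v e := by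
    by_contra! hcon
    refine not_mem_interior (S := Q) (q := 0) (a := -v) (neg_ne_zero.mpr hv0) ?_
      hQ.zero_mem_interior
    have := le_dR_of_extreme hQ (a := -v) (r := 0) fun e he => by
      have := hcon e he
      simp only [dR, Prod.fst_neg, Prod.snd_neg] at *
      linarith
    simpa [dR] using this
  obtain ⟨e0, he0, he0'⟩ := hne
  -- `w` maximises the slope, over the side line through `0` and `v`, seen from `v`.
  obtain ⟨w, hw, hmax⟩ := Finset.exists_max_image (hfin.toFinset.filter fun e => 0 < dR v e)
    (fun e => (v.1 * e.1 + v.2 * e.2 - (v.1 ^ 2 + v.2 ^ 2)) / dR v e)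
    ⟨e0, by simp [he0, he0']⟩
  simp only [Finset.mem_filter, Set.Finite.mem_toFinset] at hw hmax
  obtain ⟨hwE, hw0⟩ := hw
  refine ⟨w, hwE, hw0, le_dR_of_extreme hQ fun e he => ?_⟩
  have hs1 := hsup w hwE.1
  have hs2 := hsup e he.1
  set k := m * v.1 + n * v.2 with hk
  set N := v.1 ^ 2 + v.2 ^ 2 with hNdef
  -- Scaled coordinates of `w` and `e` in the orthogonal basis given by `v`.
  obtain ⟨aw, haw⟩ : ∃ x, x = v.1 * w.1 + v.2 * w.2 := ⟨_, rfl⟩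
  obtain ⟨ae, hae⟩ : ∃ x, x = v.1 * e.1 + v.2 * e.2 := ⟨_, rfl⟩
  obtain ⟨bw, hbw⟩ : ∃ x, x = dR v w := ⟨_, rfl⟩
  obtain ⟨be, hbe⟩ : ∃ x, x = dR v e := ⟨_, rfl⟩
  obtain ⟨φ, hφ⟩ : ∃ x, x = n * v.1 - m * v.2 := ⟨_, rfl⟩
  have key : N * (dR (w - v) e - dR (w - v) v) = (aw - N) * be - bw * (ae - N) := by
    simp only [haw, hae, hbw, hbe, dR, hNdef, Prod.fst_sub, Prod.snd_sub]
    ring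
  have i1 : k * (aw - N) ≤ -φ * bw := by
    have : k * aw + φ * bw = N * (m * w.1 + n * w.2) := by
      simp only [haw, hbw, hφ, hk, hNdef, dR]; ring
    nlinarith
  have i2 : k * (ae - N) ≤ -φ * be := by
    have : k * ae + φ * be = N * (m * e.1 + n * e.2) := by
      simp only [hae, hbe, hφ, hk, hNdef, dR]; ring
    nlinarith
  rw [← hbw] at hw0
  have goal : 0 ≤ (aw - N) * be - bw * (ae - N) := by
    rcases lt_or_ge 0 be with hb | hb
    · have := hmax e ⟨he, hbe ▸ hb⟩
      rw [← haw, ← hae, ← hbw, ← hbe, div_le_div_iff₀ hb hw0] at this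
      linarith
    · have j1 := mul_le_mul_of_nonneg_left i2 hw0.le
      have j2 := mul_le_mul_of_nonpos_left i1 hb
      have : 0 ≤ k * ((aw - N) * be - bw * (ae - N)) := by nlinarith
      exact nonneg_of_mul_nonneg_right this hpos
  rw [← key] at goal
  have := nonneg_of_mul_nonneg_right goal hN
  linarith

/-- The next lattice point of the boundary: the first one on the edge leaving `v`, at the primitive
step `(e.2, -e.1)` orthogonal to the edge normal `e`. -/
lemma exists_next (hQ : IsLReflexive ℓ Q) (hℓ : 0 < ℓ) {v : ℤ × ℤ} (hv : emb v ∈ frontier Q) :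
    ∃ v' : ℤ × ℤ, emb v' ∈ frontier Q ∧ D v v' = ℓ ∧ IsCoprime (v' - v).1 (v' - v).2 ∧
      ∀ q ∈ Q, -(ℓ : ℝ) ≤ dR (emb (v' - v)) q := by
  obtain ⟨hc, hconv, hfin, hhull⟩ := polygon_facts hQ
  obtain ⟨w, hwE, hw0, hsup⟩ := exists_edge_end hQ hv
  have hvQ : emb v ∈ Q := hc.isClosed.frontier_subset hv
  obtain ⟨⟨w', rfl⟩, -⟩ := hQ.vertices_primitive w hwE
  change emb w' ∈ _ at hwE
  change ∀ q ∈ Q, dR (emb w' - emb v) _ ≤ dR (emb w' - emb v) _ at hsup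
  change 0 < dR _ (emb w') at hw0
  have hne : emb v ≠ emb w' := by
    intro h
    rw [h] at hw0
    simp only [dR] at hw0
    linarith
  have hdot : ∀ a y : V, dotV (-a.2, a.1) y = dR a y := by
    intros; simp only [dotV, dR]; ring
  obtain ⟨F, hFdef⟩ : ∃ F : Set V, F = {y ∈ Q | ∀ z ∈ Q,
      dotV (-(emb w' - emb v).2, (emb w' - emb v).1) y ≤
      dotV (-(emb w' - emb v).2, (emb w' - emb v).1) z} := ⟨_, rfl⟩
  have hvmem : emb v ∈ F := by
    rw [hFdef]
    refine ⟨hvQ, fun z hz => ?_⟩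
    rw [hdot, hdot]
    exact hsup z hz
  have hwmem : emb w' ∈ F := by
    rw [hFdef]
    refine ⟨hwE.1, fun z hz => ?_⟩
    rw [hdot, hdot]
    refine le_trans (le_of_eq ?_) (hsup z hz)
    simp only [dR, Prod.fst_sub, Prod.snd_sub]; ring
  obtain ⟨η, hη, hF⟩ := hQ.edge_cond F (by
    refine ⟨⟨_, ?_, hFdef⟩, emb v, hvmem, emb w', hwmem, hne⟩
    intro h
    apply hne
    have h1 := congrArg Prod.fst h
    have h2 := congrArg Prod.snd h
    simp only [Prod.fst_sub, Prod.snd_sub, Prod.fst_zero, Prod.snd_zero] at h1 h2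
    ext <;> linarith)
  have hvF := hF hvmem
  have hwF := hF hwmem
  obtain ⟨⟨e, rfl⟩, -⟩ := id hη
  change IsPrimitive (emb e) at hη
  have hcop := isCoprime_of_isPrimitive hη
  simp only [Set.mem_ofPred_eq, dotV, emb] at hvF hwF
  have hvF' : e.1 * v.1 + e.2 * v.2 = -(ℓ : ℤ) := by exact_mod_cast hvF
  have hwF' : e.1 * w'.1 + e.2 * w'.2 = -(ℓ : ℤ) := by exact_mod_cast hwF
  have hDpos : 0 < D v w' := by rw [dR_emb] at hw0; exact_mod_cast hw0
  obtain ⟨x, y, hxy⟩ := hcop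
  -- `w' - v` is an integer multiple of the primitive vector `(e.2, -e.1)`.
  obtain ⟨s, hs⟩ : ∃ s, s = x * (v.2 - w'.2) + y * (w'.1 - v.1) := ⟨_, rfl⟩
  have s1 : w'.1 - v.1 = s * e.2 := by
    rw [hs]; linear_combination (v.1 - w'.1) * hxy + x * (hwF' - hvF')
  have s2 : w'.2 - v.2 = -(s * e.1) := by
    rw [hs]; linear_combination (v.2 - w'.2) * hxy + y * (hwF' - hvF')
  have hDs : D v w' = s * ℓ := by
    simp only [D]
    linear_combination v.1 * s2 - v.2 * s1 - s * hvF'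
  have hsp : 0 < s := by
    rw [hDs] at hDpos
    exact pos_of_mul_pos_left hDpos (by positivity)
  have hsR : (1 : ℝ) ≤ s := by exact_mod_cast hsp
  have hsR0 : (0 : ℝ) < s := by linarith
  have s1R : (w'.1 : ℝ) - v.1 = s * e.2 := by exact_mod_cast s1
  have s2R : (w'.2 : ℝ) - v.2 = -(s * e.1) := by exact_mod_cast s2
  have hsupp : ∀ q ∈ Q, -(ℓ : ℝ) ≤ dR (emb (e.2, -e.1)) q := by
    intro q hq
    have h := hsup q hq
    have e1 : ∀ q, dR (emb w' - emb v) q = s * dR (emb (e.2, -e.1)) q := by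
      intro q
      simp only [dR, emb, Prod.fst_sub, Prod.snd_sub]
      rw [s1R, s2R]; push_cast; ring
    rw [e1, e1] at h
    have h' := le_of_mul_le_mul_left h hsR0
    refine le_trans (le_of_eq ?_) h'
    simp only [dR, emb]; push_cast
    linarith
  refine ⟨v + (e.2, -e.1), ?_, ?_, ?_, ?_⟩
  · have hval : dR (emb (e.2, -e.1)) (emb (v + (e.2, -e.1))) = -(ℓ : ℝ) := by
      simp only [dR, emb, Prod.fst_add, Prod.snd_add]; push_cast
      linarith
    refine mem_frontier_of hQ (a := emb (e.2, -e.1)) ?_ ?_ ?_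
    · have hmem : emb (v + (e.2, -e.1)) ∈ segment ℝ (emb v) (emb w') := by
        rw [segment_eq_image']
        refine ⟨(s : ℝ)⁻¹, ⟨by positivity, inv_le_one_of_one_le₀ hsR⟩, ?_⟩
        ext
        · simp only [emb, Prod.fst_add, Prod.smul_fst, Prod.fst_sub, smul_eq_mul]
          rw [s1R]; push_cast; field_simp
        · simp only [emb, Prod.snd_add, Prod.smul_snd, Prod.snd_sub, smul_eq_mul]
          rw [s2R]; push_cast; field_simp
      exact hconv.segment_subset hvQ hwE.1 hmem
    · intro h
      rw [h] at hval
      simp only [dR] at hval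
      have : (0 : ℝ) < ℓ := by exact_mod_cast hℓ
      simp at hval
      omega
    · intro z hz
      rw [hval]; exact hsupp z hz
  · simp only [D, Prod.fst_add, Prod.snd_add]
    linear_combination -hvF'
  · refine ⟨y, -x, ?_⟩
    simp only [Prod.fst_add, Prod.snd_add, Prod.fst_sub, Prod.snd_sub]
    linear_combination hxy
  · rw [add_sub_cancel_left]; exact hsupp

lemma finite_lattice_frontier (hQ : IsLReflexive ℓ Q) : {a : ℤ × ℤ | emb a ∈ frontier Q}.Finite := by
  obtain ⟨hc, -⟩ := polygon_facts hQ
  obtain ⟨R, hR⟩ := hc.isBounded.subset_closedBall 0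
  refine ((Set.finite_Icc (-⌈R⌉) ⌈R⌉).prod (Set.finite_Icc (-⌈R⌉) ⌈R⌉)).subset fun a ha => ?_
  have h := hR (hc.isClosed.frontier_subset ha)
  rw [mem_closedBall_zero_iff, Prod.norm_def, max_le_iff, Real.norm_eq_abs, Real.norm_eq_abs,
    abs_le, abs_le] at h
  have := Int.le_ceil R
  simp only [emb] at h
  refine ⟨⟨?_, ?_⟩, ?_, ?_⟩
  · have : ((-⌈R⌉ : ℤ) : ℝ) ≤ a.1 := by push_cast; linarith
    exact_mod_cast this
  · have : ((a.1 : ℤ) : ℝ) ≤ ⌈R⌉ := by linarith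
    exact_mod_cast this
  · have : ((-⌈R⌉ : ℤ) : ℝ) ≤ a.2 := by push_cast; linarith
    exact_mod_cast this
  · have : ((a.2 : ℤ) : ℝ) ≤ ⌈R⌉ := by linarith
    exact_mod_cast this

/-- The boundary lattice points of `Q`. -/
abbrev Bd (Q : Set V) : Type := {a : ℤ × ℤ // emb a ∈ frontier Q}

/-- The boundary lattice points of an `ℓ`-reflexive polygon form a fan, and `Q` lies on the
inner side of the line through `i` and `σ i`. -/
lemma exists_fan (hQ : IsLReflexive ℓ Q) (hℓ : 0 < ℓ) [Fintype (Bd Q)] :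
    ∃ σ : Equiv.Perm (Bd Q), Fan ℓ (Subtype.val : Bd Q → ℤ × ℤ) Finset.univ σ ∧
      (∀ i : Bd Q, ∀ q ∈ Q, -(ℓ : ℝ) ≤ dR (emb ((σ i).1 - i.1)) q) := by
  obtain ⟨hc, hconv, hfin, hhull⟩ := polygon_facts hQ
  have hnext : ∀ i : Bd Q, ∃ j : Bd Q, D i.1 j.1 = ℓ ∧
      IsCoprime (j.1 - i.1).1 (j.1 - i.1).2 ∧ ∀ q ∈ Q, -(ℓ : ℝ) ≤ dR (emb (j.1 - i.1)) q := by
    rintro ⟨v, hv⟩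
    obtain ⟨v', h1, h2⟩ := exists_next hQ hℓ hv
    exact ⟨⟨v', h1⟩, h2⟩
  choose f hf1 hf2 hf3 using hnext
  have hsub := hc.isClosed.frontier_subset
  have hℓ' : (0 : ℤ) < ℓ := by exact_mod_cast hℓ
  have hsuppZ : ∀ i j : Bd Q, -(ℓ : ℤ) ≤ D ((f i).1 - i.1) j.1 := by
    intro i j
    have := hf3 i _ (hsub j.2)
    rw [dR_emb] at this
    exact_mod_cast this
  have hinj : Function.Injective f := by
    intro i j hij
    have a1 := hf1 i
    have a2 := hf1 j
    have b1 := hsuppZ i j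
    have b2 := hsuppZ j i
    rw [hij] at a1 b1
    generalize hW : (f j).1 = W at *
    -- `i` and `j` have the same successor, so each lies on the inner side of the other's edge.
    have hz : D i.1 j.1 = 0 := by
      simp only [D, Prod.fst_sub, Prod.snd_sub] at *
      linarith
    apply Subtype.ext
    refine sub_eq_zero.mp (Fan.eq_zero_of_D (u := i.1) (v := W) (by rw [a1]; exact hℓ'.ne') ?_ ?_)
    · simp only [D, Prod.fst_sub, Prod.snd_sub] at *
      linarith
    · simp only [D, Prod.fst_sub, Prod.snd_sub] at *
      linarith
  obtain ⟨σ, hσ⟩ : ∃ σ : Equiv.Perm (Bd Q), ∀ i, σ i = f i :=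
    ⟨Equiv.ofBijective f (Finite.injective_iff_bijective.mp hinj), fun _ => rfl⟩
  have hne : (frontier Q).Nonempty := by
    rw [nonempty_frontier_iff]
    refine ⟨⟨0, interior_subset hQ.zero_mem_interior⟩, fun h => ?_⟩
    have := hc.isBounded
    rw [h] at this
    exact NormedSpace.unbounded_univ ℝ V this
  refine ⟨σ, ⟨hℓ', ?_, fun _ _ => Finset.mem_univ _, fun i _ j _ h => Subtype.ext h,
    fun i _ => by rw [hσ]; exact hf1 i, fun i _ j _ => ?_, fun i _ => by rw [hσ]; exact hf2 i,
    fun i _ => ?_⟩, fun i => by rw [hσ]; exact hf3 i⟩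
  · obtain ⟨v, hv⟩ := hne
    obtain ⟨w, hwE, -⟩ := exists_edge_end hQ hv
    obtain ⟨⟨w', rfl⟩, -⟩ := hQ.vertices_primitive w hwE
    change emb w' ∈ _ at hwE
    refine ⟨⟨w', ?_⟩, Finset.mem_univ _⟩
    rw [hc.isClosed.frontier_eq]
    refine ⟨hwE.1, fun hi => ?_⟩
    -- An extreme point is not interior: it is the midpoint of no segment of `Q`.
    obtain ⟨t, ht, h1⟩ := exists_add_smul_mem hi (1, 0)
    obtain ⟨t', ht', h2⟩ := exists_add_smul_mem hi (-1, 0)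
    have := (mem_extremePoints.mp hwE).2 _ h1 _ h2 (by
      refine ⟨t' / (t + t'), t / (t + t'), by positivity, by positivity, by field_simp; ring, ?_⟩
      ext <;> simp [emb] <;> field_simp <;> ring)
    have := congrArg Prod.fst this.1
    simp at this
    linarith
  · rw [hσ]
    have := hsuppZ i j
    have h1 := hf1 i
    simp only [D, Prod.fst_sub, Prod.snd_sub] at *
    linarith
  · by_cases hE : emb (σ i).1 ∈ extremePoints ℝ Q
    · exact Or.inl (isCoprime_of_isPrimitive (hQ.vertices_primitive _ hE))
    · right
      have hv := hsub (σ i).2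
      rw [mem_extremePoints] at hE
      push Not at hE
      obtain ⟨x, hx, y, hy, ⟨s, t, hs, ht, hst, hxy⟩, hn⟩ := hE hv
      have hd1 := hf1 i
      have hd2 := hf1 (σ i)
      rw [← hσ] at hd1
      have u1x := hf3 i x hx
      have u1y := hf3 i y hy
      have u2x := hf3 (σ i) x hx
      have u2y := hf3 (σ i) y hy
      rw [← hσ] at u1x u1y u2x u2y
      rw [← hσ] at hd2
      generalize (σ (σ i)).1 = W at *
      generalize (σ i).1 = v at *
      generalize i.1 = U at *
      -- An edge through a non-extreme `v` contains the whole segment around `v`.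
      have tight : ∀ a : ℤ × ℤ, D a v = -(ℓ : ℤ) → -(ℓ : ℝ) ≤ dR (emb a) x →
          -(ℓ : ℝ) ≤ dR (emb a) y → dR (emb a) x = -ℓ ∧ dR (emb a) y = -ℓ := by
        intro a ha hax hay
        have haR : dR (emb a) (emb v) = -(ℓ : ℝ) := by rw [dR_emb, ha]; push_cast; rfl
        have hcomb : dR (emb a) (emb v) = s * dR (emb a) x + t * dR (emb a) y := by
          rw [← hxy]
          simp only [dR, Prod.fst_add, Prod.snd_add, Prod.smul_fst, Prod.smul_snd, smul_eq_mul]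
          ring
        rw [haR] at hcomb
        have hz : s * (dR (emb a) x + ℓ) + t * (dR (emb a) y + ℓ) = 0 := by
          linear_combination -hcomb + (ℓ : ℝ) * hst
        have p1 : 0 ≤ s * (dR (emb a) x + ℓ) := mul_nonneg hs.le (by linarith)
        have p2 : 0 ≤ t * (dR (emb a) y + ℓ) := mul_nonneg ht.le (by linarith)
        have z1 := (mul_eq_zero.mp (by linarith : s * (dR (emb a) x + ℓ) = 0)).resolve_left hs.ne'
        have z2 := (mul_eq_zero.mp (by linarith : t * (dR (emb a) y + ℓ) = 0)).resolve_left ht.ne'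
        exact ⟨by linarith, by linarith⟩
      have e1 : D (v - U) v = -(ℓ : ℤ) := by
        simp only [D, Prod.fst_sub, Prod.snd_sub] at *; linarith
      have e2 : D (W - v) v = -(ℓ : ℤ) := by
        simp only [D, Prod.fst_sub, Prod.snd_sub] at *; linarith
      obtain ⟨x1, y1⟩ := tight _ e1 u1x u1y
      obtain ⟨x2, y2⟩ := tight _ e2 u2x u2y
      obtain ⟨z, hzv, z1, z2⟩ : ∃ z, z ≠ emb v ∧ dR (emb (v - U)) z = -(ℓ : ℝ) ∧
          dR (emb (W - v)) z = -(ℓ : ℝ) := by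
        by_cases hxv : x = emb v
        · exact ⟨y, hn hxv, y1, y2⟩
        · exact ⟨x, hxv, x1, x2⟩
      have e1R : dR (emb (v - U)) (emb v) = -(ℓ : ℝ) := by rw [dR_emb, e1]; push_cast; rfl
      have e2R : dR (emb (W - v)) (emb v) = -(ℓ : ℝ) := by rw [dR_emb, e2]; push_cast; rfl
      have hpar : dR (emb (v - U)) (emb (W - v)) = 0 := by
        generalize emb (v - U) = a at *
        generalize emb (W - v) = b at *
        generalize emb v = v' at *
        simp only [dR] at *
        have : z.1 - v'.1 ≠ 0 ∨ z.2 - v'.2 ≠ 0 := by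
          by_contra! hh
          exact hzv (Prod.ext (sub_eq_zero.mp hh.1) (sub_eq_zero.mp hh.2))
        rcases this with hh | hh
        · refine (mul_eq_zero.mp (?_ : (z.1 - v'.1) * _ = 0)).resolve_left hh
          linear_combination b.1 * (z1 - e1R) - a.1 * (z2 - e2R)
        · refine (mul_eq_zero.mp (?_ : (z.2 - v'.2) * _ = 0)).resolve_left hh
          linear_combination b.2 * (z1 - e1R) - a.2 * (z2 - e2R)
      rw [dR_emb] at hpar
      have hparZ : D (v - U) (W - v) = 0 := by exact_mod_cast hpar
      have hg : (v - U) - (W - v) = 0 := by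
        refine Fan.eq_zero_of_D (u := v) (v := v - U) ?_ ?_ ?_
        · simp only [D, Prod.fst_sub, Prod.snd_sub] at *; linarith
        · simp only [D, Prod.fst_sub, Prod.snd_sub] at *; linarith
        · simp only [D, Prod.fst_sub, Prod.snd_sub] at *; linarith
      have g1 := congrArg Prod.fst hg
      have g2 := congrArg Prod.snd hg
      simp only [Prod.fst_sub, Prod.snd_sub, Prod.fst_zero, Prod.snd_zero] at g1 g2
      ext
      · simp only [Prod.fst_add, Prod.smul_fst, smul_eq_mul]; linarith
      · simp only [Prod.snd_add, Prod.smul_snd, smul_eq_mul]; linarith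

end

/-! ### Boundary lattice points of the dual polygon -/

section

variable {ℓ : ℕ} {Q : Set V}

lemma mem_dualPolygon (hℓ : 0 < ℓ) {x : V} :
    x ∈ dualPolygon ℓ Q ↔ ∀ y ∈ Q, -(ℓ : ℝ) ≤ dotV x y := by
  have hℓR : (0 : ℝ) < ℓ := by exact_mod_cast hℓ
  have hsmul : ∀ (r : ℝ) (z y : V), dotV (r • z) y = r * dotV z y := by
    intros; simp only [dotV, Prod.smul_fst, Prod.smul_snd, smul_eq_mul]; ring
  constructor
  · rintro ⟨z, hz, rfl⟩ y hy
    have := mul_le_mul_of_nonneg_left (hz y hy) hℓR.le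
    simp only [hsmul]
    linarith
  · intro h
    refine ⟨(ℓ : ℝ)⁻¹ • x, fun y hy => ?_, by simp [smul_smul, hℓR.ne']⟩
    have := mul_le_mul_of_nonneg_left (h y hy) (inv_nonneg.mpr hℓR.le)
    rw [hsmul]
    refine le_trans (le_of_eq ?_) this
    field_simp

lemma dotV_eq_dR (x y : V) : dotV x y = dR (x.2, -x.1) y := by
  simp only [dotV, dR]; ring

lemma isClosed_dualPolygon (hℓ : 0 < ℓ) : IsClosed (dualPolygon ℓ Q) := by
  have : dualPolygon ℓ Q = ⋂ y ∈ Q, {x : V | -(ℓ : ℝ) ≤ dotV x y} := by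
    ext x
    simp [mem_dualPolygon hℓ]
  rw [this]
  refine isClosed_biInter fun y _ => isClosed_le continuous_const ?_
  unfold dotV
  fun_prop

/-- A frontier point of the dual polygon is tight at some vertex of `Q`. -/
lemma exists_tight (hQ : IsLReflexive ℓ Q) (hℓ : 0 < ℓ) {x : V}
    (hx : x ∈ frontier (dualPolygon ℓ Q)) :
    (∀ y ∈ Q, -(ℓ : ℝ) ≤ dotV x y) ∧ ∃ e ∈ extremePoints ℝ Q, dotV x e = -ℓ := by
  rw [(isClosed_dualPolygon hℓ).frontier_eq] at hx
  have h1 := (mem_dualPolygon hℓ).mp hx.1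
  refine ⟨h1, ?_⟩
  by_contra! hcon
  refine hx.2 (interior_maximal (t := ⋂ e ∈ extremePoints ℝ Q, {x : V | -(ℓ : ℝ) < dotV x e})
    ?_ ?_ ?_)
  · intro z hz
    simp only [Set.mem_iInter, Set.mem_ofPred_eq] at hz
    refine (mem_dualPolygon hℓ).mpr fun y hy => ?_
    rw [dotV_eq_dR]
    refine le_dR_of_extreme hQ (fun e he => ?_) y hy
    rw [← dotV_eq_dR]
    exact (hz e he).le
  · refine (polygon_facts hQ).2.2.1.isOpen_biInter fun e _ => isOpen_lt continuous_const ?_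
    unfold dotV
    fun_prop
  · simp only [Set.mem_iInter, Set.mem_ofPred_eq]
    exact fun e he => lt_of_le_of_ne (h1 e he.1) (hcon e he).symm

lemma mem_frontier_dualPolygon (hℓ : 0 < ℓ) {x y : V} (h : ∀ y ∈ Q, -(ℓ : ℝ) ≤ dotV x y)
    (hy : y ∈ Q) (hxy : dotV x y = -ℓ) : x ∈ frontier (dualPolygon ℓ Q) := by
  have hℓR : (0 : ℝ) < ℓ := by exact_mod_cast hℓ
  rw [(isClosed_dualPolygon hℓ).frontier_eq]
  refine ⟨(mem_dualPolygon hℓ).mpr h, fun hi => ?_⟩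
  obtain ⟨t, ht, hm⟩ := exists_add_smul_mem hi (-y)
  have := (mem_dualPolygon hℓ).mp hm y hy
  have hpos : 0 < y.1 ^ 2 + y.2 ^ 2 := by
    have : y.1 ≠ 0 ∨ y.2 ≠ 0 := by
      by_contra! hh
      simp only [dotV, hh.1, hh.2] at hxy
      linarith
    rcases this with h | h <;> positivity
  simp only [dotV, Prod.fst_add, Prod.snd_add, Prod.smul_fst, Prod.smul_snd, smul_eq_mul,
    Prod.fst_neg, Prod.snd_neg] at this hxy
  nlinarith [mul_pos ht hpos]

/-- Rotation by a right angle; it turns the pairing `dotV` into the determinant. -/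
def rot (a : ℤ × ℤ) : ℤ × ℤ := (-a.2, a.1)

lemma rot_injective : Function.Injective rot := by
  intro a b h
  simp only [rot, Prod.mk.injEq, neg_inj] at h
  exact Prod.ext h.2 h.1

lemma dotV_rot (a : ℤ × ℤ) (y : V) : dotV (emb (rot a)) y = dR (emb a) y := by
  simp only [dotV, dR, emb, rot]; push_cast; ring

/-- For `s = ⟨i, k⟩`, the lattice point which, after rotation by `rot`, lies `k` steps along the edge
of the dual polygon corresponding to the boundary point `σ i`. -/
def dualPt (σ : Equiv.Perm (Bd Q)) (s : Σ _ : Bd Q, ℕ) : ℤ × ℤ :=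
  ((σ s.1).1 - s.1.1) - (s.2 : ℤ) • (σ s.1).1

variable [Fintype (Bd Q)] {σ : Equiv.Perm (Bd Q)} {c : Bd Q → ℤ}

lemma dualPt_tight (h : Fan ℓ (Subtype.val : Bd Q → ℤ × ℤ) Finset.univ σ)
    (hc : ∀ i : Bd Q, i.1 + (σ (σ i)).1 = c i • (σ i).1) {i : Bd Q} {k : ℕ}
    (hk : k < (2 - c i).toNat) :
    D (dualPt σ ⟨i, k⟩) (σ i).1 = -ℓ ∧ -(ℓ : ℤ) < D (dualPt σ ⟨i, k⟩) (σ (σ i)).1 := by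
  have hk' : (k : ℤ) < 2 - c i := by omega
  have d1 := h.det i (Finset.mem_univ _)
  have d2 := h.det (σ i) (Finset.mem_univ _)
  have hl := Fan.lin (σ := σ) (p := (Subtype.val : Bd Q → ℤ × ℤ)) (i.1) (hc i)
  have hp := mul_pos (sub_pos.mpr hk') h.pos
  simp only [dualPt]
  generalize (σ (σ i)).1 = W at *
  generalize (σ i).1 = v at *
  generalize i.1 = U at *
  simp only [D, Prod.fst_sub, Prod.snd_sub, Prod.smul_fst, Prod.smul_snd, smul_eq_mul] at *
  constructor
  · linear_combination -d1
  · have : (v.1 - U.1 - k * v.1) * W.2 - (v.2 - U.2 - k * v.2) * W.1 + ℓ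
        = (2 - c i - k) * ℓ := by
      linear_combination (1 - (k : ℤ)) * d2 - hl - c i * d1
    linarith

lemma dualPt_mem
    (hs : ∀ i : Bd Q, ∀ q ∈ Q, -(ℓ : ℝ) ≤ dR (emb ((σ i).1 - i.1)) q)
    (hc : ∀ i : Bd Q, i.1 + (σ (σ i)).1 = c i • (σ i).1) {i : Bd Q} {k : ℕ}
    (hk : k < (2 - c i).toNat) : ∀ q ∈ Q, -(ℓ : ℝ) ≤ dR (emb (dualPt σ ⟨i, k⟩)) q := by
  intro q hq
  have hk' : (k : ℤ) < 2 - c i := by omega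
  have hkR : (k : ℝ) < 2 - c i := by exact_mod_cast hk'
  have hk0 : (0 : ℝ) ≤ k := by positivity
  have h1 := hs i q hq
  have h2 := hs (σ i) q hq
  have c1 := congrArg Prod.fst (hc i)
  have c2 := congrArg Prod.snd (hc i)
  simp only [Prod.fst_add, Prod.snd_add, Prod.smul_fst, Prod.smul_snd, smul_eq_mul] at c1 c2
  simp only [dualPt]
  generalize (σ (σ i)).1 = W at *
  generalize (σ i).1 = v at *
  generalize i.1 = U at *
  have c1R : (U.1 : ℝ) + W.1 = c i * v.1 := by exact_mod_cast c1
  have c2R : (U.2 : ℝ) + W.2 = c i * v.2 := by exact_mod_cast c2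
  simp only [dR, emb, Prod.fst_sub, Prod.snd_sub, Prod.smul_fst, Prod.smul_snd, smul_eq_mul] at *
  push_cast at *
  have hw : (0 : ℝ) < 2 - c i := by linarith
  -- The point divides the dual edge in the ratio `k : (2 - c i - k)`.
  have m1 := mul_le_mul_of_nonneg_left h1 (sub_nonneg.mpr hkR.le)
  have m2 := mul_le_mul_of_nonneg_left h2 hk0
  refine le_of_mul_le_mul_left (?_ : (2 - (c i : ℝ)) * _ ≤ (2 - (c i : ℝ)) * _) hw
  have e : (2 - (c i : ℝ)) *
      ((v.1 - U.1 - k * v.1) * q.2 - (v.2 - U.2 - k * v.2) * q.1) =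
      (2 - c i - k) * ((v.1 - U.1) * q.2 - (v.2 - U.2) * q.1) +
      k * ((W.1 - v.1) * q.2 - (W.2 - v.2) * q.1) := by
    linear_combination (-k * q.2) * c1R + (k * q.1) * c2R
  rw [e]
  linarith

lemma dualPt_injOn (h : Fan ℓ (Subtype.val : Bd Q → ℤ × ℤ) Finset.univ σ)
    (hc : ∀ i : Bd Q, i.1 + (σ (σ i)).1 = c i • (σ i).1) :
    Set.InjOn (dualPt σ)
      ((Finset.univ.sigma fun i : Bd Q => Finset.range (2 - c i).toNat : Finset _) :
        Set (Σ _ : Bd Q, ℕ)) := by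
  -- A dual boundary point determines the last boundary point of `Q` at which it is tight.
  have key : ∀ (a : ℤ × ℤ) (i j : Bd Q), D a (σ i).1 = -ℓ → -(ℓ : ℤ) < D a (σ (σ i)).1 →
      D a (σ j).1 = -ℓ → D (σ i).1 (σ j).1 ≤ 0 := by
    intro a i j h1 h2 h3
    have hsup := h.supp (σ i) (Finset.mem_univ _) (σ j) (Finset.mem_univ _)
    have hpos := h.pos
    generalize (σ (σ i)).1 = W at *
    generalize (σ i).1 = v at *
    generalize (σ j).1 = u at *
    have e : (ℓ : ℤ) * D (W - v) (u - v) = D v u * (D a v - D a W) := by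
      simp only [D, Prod.fst_sub, Prod.snd_sub] at *
      have e1 : (ℓ : ℤ) * (u.1 - v.1) = (v.1 * u.2 - v.2 * u.1) * a.1 := by
        linear_combination u.1 * h1 - v.1 * h3
      have e2 : (ℓ : ℤ) * (u.2 - v.2) = (v.1 * u.2 - v.2 * u.1) * a.2 := by
        linear_combination u.2 * h1 - v.2 * h3
      linear_combination (W.1 - v.1) * e2 - (W.2 - v.2) * e1
    have e3 : 0 ≤ D v u * (D a v - D a W) := e ▸ mul_nonneg hpos.le hsup
    by_contra! hcon
    have : D a v - D a W < 0 := by rw [h1]; linarith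
    have := mul_neg_of_pos_of_neg hcon this
    linarith
  rintro ⟨i, k⟩ hi ⟨j, m⟩ hj hij
  simp only [Finset.coe_sigma, Set.mem_sigma_iff, Finset.mem_coe, Finset.mem_univ, true_and,
    Finset.mem_range] at hi hj
  obtain ⟨t1, t2⟩ := dualPt_tight h hc hi
  obtain ⟨t3, t4⟩ := dualPt_tight h hc hj
  have e0 : dualPt σ ⟨i, k⟩ = ((σ i).1 - i.1) - (k : ℤ) • (σ i).1 := rfl
  have e0' : dualPt σ ⟨j, m⟩ = ((σ j).1 - j.1) - (m : ℤ) • (σ j).1 := rfl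
  rw [← hij] at t3 t4 e0'
  have k1 := key _ i j t1 t2 t3
  have k2 := key _ j i t3 t4 t1
  have hD : D (σ i).1 (σ j).1 = 0 := by
    have : D (σ i).1 (σ j).1 = - D (σ j).1 (σ i).1 := by simp only [D]; ring
    omega
  have hpos := h.pos
  have heq : (σ j).1 - (σ i).1 = 0 := by
    refine Fan.eq_zero_of_D (u := (σ i).1) (v := dualPt σ ⟨i, k⟩) ?_ ?_ ?_
    · have : D (σ i).1 (dualPt σ ⟨i, k⟩) = - D (dualPt σ ⟨i, k⟩) (σ i).1 := by
        simp only [D]; ring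
      omega
    · simp only [D, Prod.fst_sub, Prod.snd_sub] at *; linarith
    · simp only [D, Prod.fst_sub, Prod.snd_sub] at *; linarith
  have hij' : i = j := σ.injective (Subtype.ext (sub_eq_zero.mp heq).symm)
  subst hij'
  have hkm : ((k : ℤ) - m) • (σ i).1 = 0 := by
    rw [e0] at e0'
    rw [sub_smul, sub_eq_zero]
    exact sub_right_injective e0'
  have hne := h.p_ne_zero (Finset.mem_univ (σ i))
  have : (k : ℤ) - m = 0 := by
    rcases smul_eq_zero.mp hkm with h | h
    · exact h
    · exact absurd h hne
  have hkmN : k = m := by omega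
  rw [hkmN]

/-- Every lattice point of the dual boundary is some `dualPt`. Let `σ i` be the last boundary
point of `Q`, in counterclockwise order, at which it is tight; there the weight is nonzero, so
`(σ i).1` is primitive and the difference to `dualPt σ ⟨i, 0⟩` is an integer multiple of it. -/
lemma exists_dualPt (hQ : IsLReflexive ℓ Q)
    (h : Fan ℓ (Subtype.val : Bd Q → ℤ × ℤ) Finset.univ σ)
    (hc : ∀ i : Bd Q, i.1 + (σ (σ i)).1 = c i • (σ i).1) {a : ℤ × ℤ}
    (ha : ∀ q ∈ Q, -(ℓ : ℝ) ≤ dR (emb a) q) {e : Bd Q} (he : D a e.1 = -ℓ) :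
    ∃ i : Bd Q, ∃ k < (2 - c i).toNat, dualPt σ ⟨i, k⟩ = a := by
  classical
  have hpos := h.pos
  have haZ : ∀ j : Bd Q, -(ℓ : ℤ) ≤ D a j.1 := by
    intro j
    have := ha _ ((polygon_facts hQ).1.isClosed.frontier_subset j.2)
    rw [dR_emb] at this
    exact_mod_cast this
  -- The boundary points where `a` is tight are not closed under `σ`.
  obtain ⟨j, hj, hj'⟩ : ∃ j : Bd Q, D a j.1 = -ℓ ∧ D a (σ j).1 ≠ -ℓ := by
    by_contra! hcon
    have hall := h.eq_of_stable (S := Finset.univ.filter fun j : Bd Q => D a j.1 = -ℓ)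
      (Finset.subset_univ _) ⟨e, by simpa using he⟩ fun j hj => by
        simpa using hcon j (by simpa using hj)
    have ha0 : -a ≠ 0 := by
      rw [neg_ne_zero]
      rintro rfl
      simp only [D, Prod.fst_zero, Prod.snd_zero] at he
      omega
    obtain ⟨i, hi, hi'⟩ := h.exists_neg ha0
    rw [← hall] at hi
    simp only [Finset.mem_filter, Finset.mem_univ, true_and] at hi
    simp only [D, Prod.fst_neg, Prod.snd_neg] at *
    linarith
  obtain ⟨i, rfl⟩ := σ.surjective j
  have b1 := haZ i
  have b2 := lt_of_le_of_ne (haZ (σ (σ i))) hj'.symm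
  have d1 := h.det i (Finset.mem_univ _)
  have d2 := h.det (σ i) (Finset.mem_univ _)
  have hv := h.vert i (Finset.mem_univ _)
  have hlin := Fan.lin (σ := σ) (p := (Subtype.val : Bd Q → ℤ × ℤ)) i.1 (hc i)
  have hlina := Fan.lin (σ := σ) (p := (Subtype.val : Bd Q → ℤ × ℤ)) a (hc i)
  have hne := h.p_ne_zero (Finset.mem_univ (σ i))
  have hci := hc i
  have hpt : ∀ k : ℕ, dualPt σ ⟨i, k⟩ = ((σ i).1 - i.1) - (k : ℤ) • (σ i).1 := fun _ => rfl
  simp only [Subtype.forall] at *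
  suffices hk : ∃ k : ℕ, k < (2 - c i).toNat ∧ ((σ i).1 - i.1) - (k : ℤ) • (σ i).1 = a by
    obtain ⟨k, hk1, hk2⟩ := hk
    exact ⟨i, k, hk1, (hpt k).trans hk2⟩
  generalize (σ (σ i)).1 = W at *
  generalize (σ i).1 = v at *
  generalize i.1 = U at *
  -- If `c i = 2`, then `D a U + D a W = -2ℓ` with both terms at least `-ℓ` makes `W` tight.
  have hc2 : c i ≠ 2 := by
    intro h2
    rw [h2, hj] at hlina
    linarith
  have hcop : IsCoprime v.1 v.2 := by
    refine hv.resolve_right fun h2 => hc2 ?_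
    have : (c i - 2) • v = 0 := by rw [sub_smul, ← hci, h2, sub_self]
    rcases smul_eq_zero.mp this with h | h
    · omega
    · exact absurd h hne
  obtain ⟨x, y, hxy⟩ := hcop
  simp only [D] at *
  -- The difference is parallel to the primitive vector `v`.
  obtain ⟨s, hs⟩ : ∃ s, s = x * (v.1 - U.1 - a.1) + y * (v.2 - U.2 - a.2) := ⟨_, rfl⟩
  have s1 : v.1 - U.1 - a.1 = s * v.1 := by
    rw [hs]; linear_combination (-(v.1 - U.1 - a.1)) * hxy + y * (-hj - d1)
  have s2 : v.2 - U.2 - a.2 = s * v.2 := by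
    rw [hs]; linear_combination (-(v.2 - U.2 - a.2)) * hxy - x * (-hj - d1)
  have hs0 : 0 ≤ s := by
    have : s * ℓ = (a.1 * U.2 - a.2 * U.1) + ℓ := by
      linear_combination (1 - s) * d1 + U.2 * s1 - U.1 * s2
    exact nonneg_of_mul_nonneg_left (by linarith) hpos
  have hs1 : s < 2 - c i := by
    have : (2 - c i - s) * ℓ = (a.1 * W.2 - a.2 * W.1) + ℓ := by
      linear_combination W.2 * s1 - W.1 * s2 - (1 - s) * d2 + hlin + c i * d1
    have : 0 < 2 - c i - s := pos_of_mul_pos_left (by rw [this]; linarith) hpos.le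
    linarith
  refine ⟨s.toNat, by omega, ?_⟩
  rw [Int.toNat_of_nonneg hs0]
  ext
  · simp only [Prod.fst_sub, Prod.smul_fst, smul_eq_mul]; linarith
  · simp only [Prod.snd_sub, Prod.smul_snd, smul_eq_mul]; linarith

/-- The dual edge corresponding to the point `σ i` contributes `2 - c i` boundary lattice points. -/
lemma ncard_frontier_dual (hQ : IsLReflexive ℓ Q) (hℓ : 0 < ℓ)
    (h : Fan ℓ (Subtype.val : Bd Q → ℤ × ℤ) Finset.univ σ)
    (hs : ∀ i : Bd Q, ∀ q ∈ Q, -(ℓ : ℝ) ≤ dR (emb ((σ i).1 - i.1)) q)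
    (hc : ∀ i : Bd Q, i.1 + (σ (σ i)).1 = c i • (σ i).1) (hc2 : ∀ i, c i ≤ 2) :
    ((frontier (dualPolygon ℓ Q) ∩ latticePts).ncard : ℤ) = ∑ i, (2 - c i) := by
  have hset : frontier (dualPolygon ℓ Q) ∩ latticePts =
      (fun s => emb (rot (dualPt σ s))) ''
        ((Finset.univ.sigma fun i : Bd Q => Finset.range (2 - c i).toNat : Finset _) :
          Set (Σ _ : Bd Q, ℕ)) := by
    ext x
    constructor
    · rintro ⟨hx, ⟨b, rfl⟩⟩
      change emb b ∈ _ at hx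
      obtain ⟨a, rfl⟩ : ∃ a, rot a = b := ⟨(b.2, -b.1), by simp [rot]⟩
      obtain ⟨h1, e, heE, he⟩ := exists_tight hQ hℓ hx
      simp only [dotV_rot] at h1 he
      obtain ⟨⟨e', rfl⟩, -⟩ := hQ.vertices_primitive e heE
      change emb e' ∈ _ at heE
      change dR _ (emb e') = _ at he
      have ha0 : emb a ≠ 0 := by
        intro h0
        have : (0 : ℝ) < ℓ := by exact_mod_cast hℓ
        rw [h0] at he
        simp only [dR, Prod.fst_zero, Prod.snd_zero] at he
        linarith
      have hfr : emb e' ∈ frontier Q :=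
        mem_frontier_of hQ heE.1 ha0 fun z hz => by rw [he]; exact h1 z hz
      rw [dR_emb] at he
      obtain ⟨i, k, hk, hik⟩ := exists_dualPt hQ h hc h1 (e := ⟨e', hfr⟩) (by exact_mod_cast he)
      exact ⟨⟨i, k⟩, by simpa using hk, congrArg (fun z => emb (rot z)) hik⟩
    · rintro ⟨⟨i, k⟩, hk, rfl⟩
      have hk' : k < (2 - c i).toNat := by simpa using hk
      refine ⟨?_, ⟨_, rfl⟩⟩
      refine mem_frontier_dualPolygon (y := emb (σ i).1) hℓ (fun y hy => ?_)
        ((polygon_facts hQ).1.isClosed.frontier_subset (σ i).2) ?_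
      · rw [dotV_rot]
        exact dualPt_mem hs hc hk' y hy
      · rw [dotV_rot, dR_emb, (dualPt_tight h hc hk').1]
        push_cast; rfl
  rw [hset, Set.InjOn.ncard_image, Set.ncard_coe_finset, Finset.card_sigma, Nat.cast_sum]
  · refine Finset.sum_congr rfl fun i _ => ?_
    rw [Finset.card_range, Int.toNat_of_nonneg (sub_nonneg.mpr (hc2 i))]
  · intro s hs' t ht hst
    exact dualPt_injOn h hc hs' ht (rot_injective (emb_injective hst))

end

/-- **Possible boundary lattice-point counts** for an ℓ-reflexive polygon and its dual. -/
theorem boundary_count_values (ℓ : ℕ) (hℓ : 0 < ℓ) (Q : Set V) (hQ : IsLReflexive ℓ Q) :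
    ((frontier Q ∩ latticePts).ncard, (frontier (dualPolygon ℓ Q) ∩ latticePts).ncard)
      ∈ ({(3, 9), (4, 8), (5, 7), (6, 6), (7, 5), (8, 4), (9, 3)} : Set (ℕ × ℕ)) := by
  classical
  have : Fintype (Bd Q) := (finite_lattice_frontier hQ).fintype
  obtain ⟨σ, h, hs⟩ := exists_fan hQ hℓ
  obtain ⟨c, hc⟩ := h.exists_coeff
  have hW := ncard_frontier_dual hQ hℓ h hs (fun i => (hc i (Finset.mem_univ _)).1)
    (fun i => (hc i (Finset.mem_univ _)).2.1)
  have h12 := h.card_add_weight hc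
  have h3 := h.three_le_card
  have h3' := h.three_le_weight fun i hi => ⟨(hc i hi).1, (hc i hi).2.1⟩
  have hn : (frontier Q ∩ latticePts).ncard = (Finset.univ : Finset (Bd Q)).card := by
    have hset : frontier Q ∩ latticePts = emb '' {a | emb a ∈ frontier Q} := by
      ext x
      constructor
      · rintro ⟨hx, ⟨a, rfl⟩⟩
        exact ⟨a, hx, rfl⟩
      · rintro ⟨a, ha, rfl⟩
        exact ⟨ha, a, rfl⟩
    rw [hset, Set.ncard_image_of_injective _ emb_injective, Finset.card_univ,
      ← Nat.card_eq_fintype_card]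
    rfl
  rw [← hW, ← hn] at h12
  rw [← hn] at h3
  rw [← hW] at h3'
  generalize (frontier Q ∩ latticePts).ncard = n at *
  generalize (frontier (dualPolygon ℓ Q) ∩ latticePts).ncard = m at *
  have hm : m = 12 - n := by omega
  have hn9 : n ≤ 9 := by omega
  subst hm
  interval_cases n <;> simp
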